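/- arXiv:2401.12968 — 2 statements merged into one kernel-verified Lean document; each statement's English description precedes it below -/
import Mathlib

section
/- Let S ≥ 1/2 be a half-integer and G = (V,E,w) a finite undirected graph with nonnegative edge weights. Then ((S+1)/S)² · CHA(G) ≤ QHA_S(G) ≤ CHA(G), where QHA_S(G) is the smallest eigenvalue of the spin-S Heisenberg antiferromagnet (1/(2S²)) Σ_{{i,j}∈E} w_ij Σ_{α=1}^3 Ŝ^α_i Ŝ^α_j on (ℂ^d)^{⊗V}, and CHA(G) = min over assignments of unit vectors Ω_i ∈ S² ⊂ ℝ³ to the vertices of (1/2) Σ_{{i,j}∈E} w_ij Ω_i·Ω_j. -/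
open Matrix MeasureTheory Filter
open scoped BigOperators RealInnerProductSpace Kronecker

noncomputable section

/-- The spin value `S = n/2` for a half-integer spin encoded by `n : ℕ` (`n ≥ 1` means `S ≥ 1/2`). -/
def spinVal (n : ℕ) : ℝ := (n : ℝ) / 2

/-- The raising operator `S⁺` on `ℂ^(n+1)` in the basis `|m⟩`, `m = k − n/2`, `k = 0, …, n`:
`S⁺|m⟩ = √(S(S+1) − m(m+1)) |m+1⟩`. -/
def spinP (n : ℕ) : Matrix (Fin (n+1)) (Fin (n+1)) ℂ :=
  fun j k => if (j : ℕ) = (k : ℕ) + 1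
    then (Real.sqrt (spinVal n * (spinVal n + 1)
      - ((k : ℝ) - spinVal n) * (((k : ℝ) - spinVal n) + 1)) : ℂ)
    else 0

/-- The standard spin-`S` matrices `Ŝ¹, Ŝ², Ŝ³` on `ℂ^(n+1)`, where `S = n/2`:
`Ŝ¹ = (S⁺ + S⁻)/2`, `Ŝ² = (S⁺ − S⁻)/(2i)`, `Ŝ³|m⟩ = m|m⟩`, with `S⁻ = (S⁺)ᴴ`. -/
def spinMat (n : ℕ) : Fin 3 → Matrix (Fin (n+1)) (Fin (n+1)) ℂ :=
  fun α =>
    if α = 0 then (1/2 : ℂ) • (spinP n + (spinP n)ᴴ)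
    else if α = 1 then (1/(2*Complex.I) : ℂ) • (spinP n - (spinP n)ᴴ)
    else Matrix.diagonal (fun k => (((k : ℝ) - spinVal n : ℝ) : ℂ))

/-- The operator `A` acting on tensor factor `i` of `(ℂ^(n+1))^{⊗V}` and as the identity
elsewhere, realized as a matrix indexed by configurations `V → Fin (n+1)`. -/
def siteOp {V : Type*} [Fintype V] [DecidableEq V] (n : ℕ) (i : V)
    (A : Matrix (Fin (n+1)) (Fin (n+1)) ℂ) :
    Matrix (V → Fin (n+1)) (V → Fin (n+1)) ℂ :=
  fun x y => if ∀ j, j ≠ i → x j = y j then A (x i) (y i) else 0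

/-- The Heisenberg coupling `Σ_{α=1}^3 Ŝ^α_i Ŝ^α_j` between sites `i` and `j`. -/
def heis {V : Type*} [Fintype V] [DecidableEq V] (n : ℕ) (i j : V) :
    Matrix (V → Fin (n+1)) (V → Fin (n+1)) ℂ :=
  ∑ α : Fin 3, siteOp n i (spinMat n α) * siteOp n j (spinMat n α)

/-- The largest eigenvalue of a complex matrix (as a real number). -/
def maxEig {m : Type*} [Fintype m] (A : Matrix m m ℂ) : ℝ :=
  sSup {r : ℝ | ∃ v : m → ℂ, v ≠ 0 ∧ A.mulVec v = (r : ℂ) • v}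

/-- The smallest eigenvalue of a complex matrix (as a real number). -/
def minEig {m : Type*} [Fintype m] (A : Matrix m m ℂ) : ℝ :=
  sInf {r : ℝ | ∃ v : m → ℂ, v ≠ 0 ∧ A.mulVec v = (r : ℂ) • v}

/-- The spin-`S` Quantum Max-Cut Hamiltonian
`Ĥ_QMC = (1/2) Σ_{{i,j}∈E} w_ij (𝟙 − (1/S²) Σ_α Ŝ^α_i Ŝ^α_j)`, written as a sum over
ordered pairs of vertices (each unordered edge counted twice, whence the factor `1/4`). -/
def hQMC {V : Type*} [Fintype V] [DecidableEq V] (n : ℕ) (w : V → V → ℝ) :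
    Matrix (V → Fin (n+1)) (V → Fin (n+1)) ℂ :=
  (1/4 : ℂ) • ∑ i, ∑ j, (w i j : ℂ) •
    ((1 : Matrix (V → Fin (n+1)) (V → Fin (n+1)) ℂ)
      - ((1/(spinVal n)^2 : ℝ) : ℂ) • heis n i j)

/-- The value `QMaxCut_S(G)`: the largest eigenvalue of `Ĥ_QMC`. -/
def qMaxCut {V : Type*} [Fintype V] [DecidableEq V] (n : ℕ) (w : V → V → ℝ) : ℝ :=
  maxEig (hQMC n w)

/-- The spin-`S` Heisenberg antiferromagnet `Ĥ_QHA = (1/(2S²)) Σ_{{i,j}∈E} w_ij Σ_α Ŝ^α_i Ŝ^α_j`,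
written as a sum over ordered pairs of vertices (each unordered edge counted twice,
whence the factor `1/(4S²)`). -/
def hQHA {V : Type*} [Fintype V] [DecidableEq V] (n : ℕ) (w : V → V → ℝ) :
    Matrix (V → Fin (n+1)) (V → Fin (n+1)) ℂ :=
  ((1/(4 * (spinVal n)^2) : ℝ) : ℂ) • ∑ i, ∑ j, (w i j : ℂ) • heis n i j

/-- The classical cut energy `(1/2) Σ_{{i,j}∈E} w_ij (1 − u_i·u_j)`, written as a sum over
ordered pairs of vertices (each unordered edge counted twice, whence the factor `1/4`). -/
def cutEnergy {V : Type*} [Fintype V] (w : V → V → ℝ)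
    (u : V → EuclideanSpace ℝ (Fin 3)) : ℝ :=
  (1/4) * ∑ i, ∑ j, w i j * (1 - ⟪u i, u j⟫)

/-- The product-state value `Prod(G)`: the maximum of the cut energy over assignments of
unit vectors in `ℝ³` to the vertices. -/
def prodVal {V : Type*} [Fintype V] (w : V → V → ℝ) : ℝ :=
  sSup {x : ℝ | ∃ Ω : V → EuclideanSpace ℝ (Fin 3), (∀ i, ‖Ω i‖ = 1) ∧ x = cutEnergy w Ω}

/-- The classical Heisenberg energy `(1/2) Σ_{{i,j}∈E} w_ij Ω_i·Ω_j`. -/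
def chaEnergy {V : Type*} [Fintype V] (w : V → V → ℝ)
    (Ω : V → EuclideanSpace ℝ (Fin 3)) : ℝ :=
  (1/4) * ∑ i, ∑ j, w i j * ⟪Ω i, Ω j⟫

/-- The value `CHA(G)` of the classical Heisenberg antiferromagnet. -/
def chaVal {V : Type*} [Fintype V] (w : V → V → ℝ) : ℝ :=
  sInf {x : ℝ | ∃ Ω : V → EuclideanSpace ℝ (Fin 3), (∀ i, ‖Ω i‖ = 1) ∧ x = chaEnergy w Ω}

/-!
Write spin `S` as the space of `2S` Schwinger bosons of two species, up and down. On coherent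
states the annihilation operators act by scalars, so a normally ordered quadratic expression has an
explicit expectation (lower symbol) in a coherent state, while an antinormally ordered one is an
explicit superposition (upper symbol) of projections onto coherent states. Writing the spin matrices
in the two orderings shows that the coherent state in direction `Ω` has spin expectation `S Ω`, and
that the spin matrices are superpositions of coherent projections with coefficients `(S + 1) Ω`.
Since a coupling between two different sites is a product of one-site operators, taking tensor
products gives the antiferromagnet the classical energy as its lower symbol and
`((S + 1) / S)²` times the classical energy as its upper symbol. Its smallest eigenvalue is at most
every value of the lower symbol, by the variational principle, and at least the minimum of the upper
symbol, because the coherent projections are positive and resolve the identity. Instead of an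
integral over the sphere, the resolution of the identity used here is a finite positive quadrature.
-/

open scoped ComplexConjugate ComplexOrder MatrixOrder Nat

theorem isCompact_convexHull {E : Type*} [AddCommGroup E] [Module ℝ E] [TopologicalSpace E]
    [ContinuousAdd E] [ContinuousSMul ℝ E] [FiniteDimensional ℝ E] {s : Set E}
    (hs : IsCompact s) : IsCompact (convexHull ℝ s) := by
  let combos (k : ℕ) : Set E :=
    (fun q : (Fin k → ℝ) × (Fin k → E) ↦ ∑ i, q.1 i • q.2 i) ''
      (stdSimplex ℝ (Fin k) ×ˢ Set.univ.pi fun _ ↦ s)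
  have combos_compact (k : ℕ) : IsCompact (combos k) :=
    ((isCompact_stdSimplex ℝ (Fin k)).prod (isCompact_univ_pi fun _ ↦ hs)).image (by fun_prop)
  suffices h : convexHull ℝ s = ⋃ k ∈ Set.Iic (Module.finrank ℝ E + 1), combos k by
    rw [h]
    exact (Set.finite_Iic _).isCompact_biUnion fun k _ ↦ combos_compact k
  refine subset_antisymm (fun x hx ↦ ?_) (Set.iUnion₂_subset ?_)
  · obtain ⟨ι, _, z, w, hz, hindep, hw, hsum, rfl⟩ := eq_pos_convex_span_of_mem_convexHull hx
    have hcard : Fintype.card ι ≤ Module.finrank ℝ E + 1 :=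
      hindep.card_le_finrank_succ.trans (by gcongr; exact Submodule.finrank_le _)
    let e := (Fintype.equivFin ι).symm
    exact Set.mem_biUnion hcard ⟨(w ∘ e, z ∘ e),
      ⟨⟨fun i ↦ (hw (e i)).le, (e.sum_comp w).trans hsum⟩,
        fun i _ ↦ hz (Set.mem_range_self (e i))⟩, e.sum_comp fun i ↦ w i • z i⟩
  · rintro k - _ ⟨⟨w, z⟩, ⟨⟨hw, hsum⟩, hz⟩, rfl⟩
    exact mem_convexHull_of_exists_fintype w z hw hsum (fun i ↦ hz i trivial) rfl

theorem exists_quadrature {X : Type*} [TopologicalSpace X] [CompactSpace X] [MeasurableSpace X]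
    [BorelSpace X] (μ : Measure X) [IsProbabilityMeasure μ] {E : Type*} [NormedAddCommGroup E]
    [NormedSpace ℝ E] [FiniteDimensional ℝ E] {f : X → E} (hf : Continuous f) :
    ∃ (ι : Type) (_ : Fintype ι) (p : ι → ℝ) (x : ι → X),
      (∀ i, 0 ≤ p i) ∧ ∑ i, p i • f (x i) = ∫ x, f x ∂μ := by
  have hclosed : IsClosed (convexHull ℝ (Set.range f)) :=
    (isCompact_convexHull (isCompact_range hf)).isClosed
  have hmem : ∫ x, f x ∂μ ∈ convexHull ℝ (Set.range f) :=
    (convex_convexHull ℝ _).integral_mem hclosed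
      (.of_forall fun x ↦ subset_convexHull ℝ _ (Set.mem_range_self x))
      (hf.integrable_of_hasCompactSupport (.of_compactSpace f))
  obtain ⟨ι, hι, p, y, hp, -, hy, hsum⟩ := mem_convexHull_iff_exists_fintype.1 hmem
  choose x hx using hy
  exact ⟨ι, hι, p, x, hp, by simpa only [hx] using hsum⟩

theorem integral_pow_mul_one_sub_pow (k l : ℕ) :
    ∫ x in (0 : ℝ)..1, x ^ k * (1 - x) ^ l
      = (k ! * l ! / (k + l + 1)! : ℝ) := by
  have hbeta := Complex.Gamma_mul_Gamma_eq_betaIntegral (s := k + 1) (t := l + 1)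
    (by norm_cast; omega) (by norm_cast; omega)
  have hcast : Complex.betaIntegral (k + 1) (l + 1)
      = ((∫ x in (0 : ℝ)..1, x ^ k * (1 - x) ^ l : ℝ) : ℂ) := by
    simp [Complex.betaIntegral, ← intervalIntegral.integral_ofReal]
  rw [hcast, show (k + 1 + (l + 1) : ℂ) = (k + l + 1 : ℕ) + 1 by push_cast; ring] at hbeta
  simp only [Complex.Gamma_nat_eq_factorial] at hbeta
  rw [eq_div_iff (by positivity), mul_comm]
  exact_mod_cast hbeta.symm

theorem integral_fourier {T : ℝ} [Fact (0 < T)] (m : ℤ) :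
    ∫ t : AddCircle T, fourier m t ∂AddCircle.haarAddCircle = if m = 0 then 1 else 0 := by
  simpa [fourierCoeff, Pi.single_apply, eq_comm] using congrFun (fourierCoeff_fourier (T := T) m) 0

/-- The spin coherent state of spin `n/2` with spinor `(a, b)`: the `n`-th tensor power of
`a|↑⟩ + b|↓⟩`, in the basis `|m⟩`, `m = k - n/2`, where `k` is the number of up spins. -/
def coherentVec (n : ℕ) (a b : ℂ) : Fin (n + 1) → ℂ :=
  fun k ↦ (√(n.choose k) : ℂ) * (a ^ (k : ℕ) * b ^ (n - k))

theorem star_coherentVec_dotProduct_self (n : ℕ) (a b : ℂ) :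
    star (coherentVec n a b) ⬝ᵥ coherentVec n a b = ((‖a‖ ^ 2 + ‖b‖ ^ 2) ^ n : ℝ) := by
  rw [add_pow, ← Fin.sum_univ_eq_sum_range
    (fun k ↦ (‖a‖ ^ 2) ^ k * (‖b‖ ^ 2) ^ (n - k) * (n.choose k : ℝ)), Complex.ofReal_sum]
  refine Finset.sum_congr rfl fun k _ ↦ ?_
  rw [Pi.star_apply, Complex.star_def, Complex.conj_mul', coherentVec]
  norm_cast
  rw [norm_mul, norm_mul, norm_pow, norm_pow, Complex.norm_real,
    Real.norm_of_nonneg (by positivity), mul_pow, Real.sq_sqrt (by positivity)]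
  ring

/-- The operator creating an up boson. In Schwinger's representation of spin, spin `n/2` is the
space of states of `n` bosons of two species, up and down, and `|m⟩` with `m = k - n/2` is the
state with `k` up and `n - k` down bosons. -/
def createUp (n : ℕ) : Matrix (Fin (n + 2)) (Fin (n + 1)) ℂ :=
  of fun j k ↦ if j = k.succ then (√(k + 1 : ℝ) : ℂ) else 0

/-- The operator creating a down boson; see `createUp`. -/
def createDown (n : ℕ) : Matrix (Fin (n + 2)) (Fin (n + 1)) ℂ :=
  of fun j k ↦ if j = k.castSucc then (√(n + 1 - k : ℝ) : ℂ) else 0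

theorem ofReal_sqrt_mul_self {x : ℝ} (hx : 0 ≤ x) : (√x : ℂ) * √x = x := by
  exact_mod_cast Real.mul_self_sqrt hx

section Schwinger

variable (n : ℕ)

theorem natCast_sub_fin_nonneg (k : Fin (n + 1)) : (0 : ℝ) ≤ n - k :=
  sub_nonneg.2 (mod_cast Nat.lt_succ_iff.1 k.is_lt)

theorem conjTranspose_createUp_mulVec (v : Fin (n + 2) → ℂ) (k : Fin (n + 1)) :
    ((createUp n)ᴴ *ᵥ v) k = √(k + 1 : ℝ) * v k.succ := by
  simp [createUp, mulVec, dotProduct, apply_ite (starRingEnd ℂ)]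

theorem conjTranspose_createDown_mulVec (v : Fin (n + 2) → ℂ) (k : Fin (n + 1)) :
    ((createDown n)ᴴ *ᵥ v) k = √(n + 1 - k : ℝ) * v k.castSucc := by
  simp [createDown, mulVec, dotProduct, apply_ite (starRingEnd ℂ)]

theorem conjTranspose_createUp_mulVec_coherentVec (a b : ℂ) :
    (createUp n)ᴴ *ᵥ coherentVec (n + 1) a b = (√(n + 1 : ℝ) * a : ℂ) • coherentVec n a b := by
  ext k
  have hchoose : (√(k + 1 : ℝ) * √((n + 1).choose (k + 1)) : ℂ)
      = √(n + 1 : ℝ) * √(n.choose k) := by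
    norm_cast
    rw [← Real.sqrt_mul (by positivity), ← Real.sqrt_mul (by positivity), mul_comm]
    exact_mod_cast congrArg (fun m : ℕ ↦ √(m : ℝ)) (Nat.add_one_mul_choose_eq n k).symm
  simp only [conjTranspose_createUp_mulVec, coherentVec, Fin.val_succ, Nat.add_sub_add_right,
    pow_succ, Pi.smul_apply, smul_eq_mul]
  linear_combination (a ^ (k : ℕ) * b ^ (n - k) * a) * hchoose

theorem conjTranspose_createDown_mulVec_coherentVec (a b : ℂ) :
    (createDown n)ᴴ *ᵥ coherentVec (n + 1) a b = (√(n + 1 : ℝ) * b : ℂ) • coherentVec n a b := by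
  ext k
  have hk : (k : ℕ) ≤ n := Nat.lt_succ_iff.1 k.is_lt
  have hchoose : (√(n + 1 - k : ℝ) * √((n + 1).choose k) : ℂ)
      = √(n + 1 : ℝ) * √(n.choose k) := by
    have hcast : ((n + 1 - k : ℕ) : ℝ) = n + 1 - k := by push_cast [hk.trans n.le_succ]; rfl
    rw [← hcast]
    norm_cast
    rw [← Real.sqrt_mul (by positivity), ← Real.sqrt_mul (by positivity), mul_comm,
      mul_comm (((n + 1 : ℕ) : ℝ))]
    exact_mod_cast congrArg (fun m : ℕ ↦ √(m : ℝ)) (Nat.choose_mul_succ_eq n k).symm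
  simp only [conjTranspose_createDown_mulVec, coherentVec, Fin.val_castSucc, Nat.succ_sub hk,
    pow_succ, Pi.smul_apply, smul_eq_mul]
  linear_combination (a ^ (k : ℕ) * b ^ (n - k) * b) * hchoose

theorem spinP_apply (j k : Fin (n + 1)) :
    spinP n j k = if (j : ℕ) = k + 1 then (√(k + 1 : ℝ) * √(n - k : ℝ) : ℂ) else 0 := by
  rw [spinP, ← Complex.ofReal_mul, ← Real.sqrt_mul (by positivity)]
  congr 4
  rw [spinVal]
  ring

theorem spinP_eq_conjTranspose_createDown_mul_createUp :
    spinP n = (createDown n)ᴴ * createUp n := by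
  ext j k
  rw [spinP_apply]
  refine Eq.trans ?_ (conjTranspose_createDown_mulVec n ((createUp n).col k) j).symm
  simp only [col_apply, createUp, of_apply, Fin.ext_iff, Fin.val_castSucc, Fin.val_succ, mul_ite,
    mul_zero]
  refine if_ctx_congr Iff.rfl (fun h ↦ ?_) fun _ ↦ rfl
  rw [h, mul_comm]
  push_cast
  ring_nf

theorem conjTranspose_createUp_mul_self :
    (createUp n)ᴴ * createUp n = diagonal fun k : Fin (n + 1) ↦ (k + 1 : ℂ) := by
  ext j k
  refine (conjTranspose_createUp_mulVec n ((createUp n).col k) j).trans ?_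
  simp only [col_apply, createUp, of_apply, Fin.succ_inj, mul_ite, mul_zero, diagonal_apply]
  refine if_ctx_congr Iff.rfl (fun h ↦ ?_) fun _ ↦ rfl
  rw [h, ofReal_sqrt_mul_self (by positivity)]
  push_cast
  rfl

theorem conjTranspose_createDown_mul_self :
    (createDown n)ᴴ * createDown n = diagonal fun k : Fin (n + 1) ↦ (n + 1 - k : ℂ) := by
  ext j k
  refine (conjTranspose_createDown_mulVec n ((createDown n).col k) j).trans ?_
  simp only [col_apply, createDown, of_apply, Fin.castSucc_inj, mul_ite, mul_zero, diagonal_apply]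
  refine if_ctx_congr Iff.rfl (fun h ↦ ?_) fun _ ↦ rfl
  rw [h, ofReal_sqrt_mul_self (by linarith [natCast_sub_fin_nonneg n k])]
  push_cast
  rfl

theorem spinP_succ_eq_createUp_mul_conjTranspose_createDown :
    spinP (n + 1) = createUp n * (createDown n)ᴴ := by
  ext j k
  rw [spinP_apply, mul_apply]
  induction k using Fin.lastCases with
  | last =>
    rw [if_neg (by have := j.is_lt; rw [Fin.val_last]; omega)]
    simp [createDown, (Fin.castSucc_ne_last _).symm]
  | cast k =>
    simp only [createUp, createDown, conjTranspose_apply, of_apply, Fin.castSucc_inj,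
      apply_ite star, star_zero, mul_ite, mul_zero, Finset.sum_ite_eq, Finset.mem_univ, if_true,
      ite_mul, zero_mul, Complex.star_def, Complex.conj_ofReal]
    simp [Fin.ext_iff]

theorem createUp_mul_conjTranspose_self :
    createUp n * (createUp n)ᴴ = diagonal fun k : Fin (n + 2) ↦ (k : ℂ) := by
  ext j k
  rw [mul_apply]
  induction k using Fin.cases with
  | zero => simp +contextual [createUp, diagonal_apply, (Fin.succ_ne_zero _).symm]
  | succ k =>
    simp only [createUp, conjTranspose_apply, of_apply, Fin.succ_inj, apply_ite star,
      star_zero, mul_ite, mul_zero, Finset.sum_ite_eq, Finset.mem_univ, if_true, ite_mul, zero_mul,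
      Complex.star_def, Complex.conj_ofReal, diagonal_apply]
    refine if_ctx_congr Iff.rfl (fun h ↦ ?_) fun _ ↦ rfl
    rw [h, ofReal_sqrt_mul_self (by positivity)]
    simp

theorem createDown_mul_conjTranspose_self :
    createDown n * (createDown n)ᴴ = diagonal fun k : Fin (n + 2) ↦ (n + 1 - k : ℂ) := by
  ext j k
  rw [mul_apply]
  induction k using Fin.lastCases with
  | last => simp +contextual [createDown, diagonal_apply, (Fin.castSucc_ne_last _).symm]
  | cast k =>
    simp only [createDown, conjTranspose_apply, of_apply, Fin.castSucc_inj, apply_ite star,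
      star_zero, mul_ite, mul_zero, Finset.sum_ite_eq, Finset.mem_univ, if_true, ite_mul, zero_mul,
      Complex.star_def, Complex.conj_ofReal, diagonal_apply]
    refine if_ctx_congr Iff.rfl (fun h ↦ ?_) fun _ ↦ rfl
    rw [h, ofReal_sqrt_mul_self (by linarith [natCast_sub_fin_nonneg n k])]
    simp

end Schwinger

theorem spinMat_zero (n : ℕ) : spinMat n 0 = (1 / 2 : ℂ) • (spinP n + (spinP n)ᴴ) :=
  rfl

theorem spinMat_one (n : ℕ) : spinMat n 1 = (1 / (2 * Complex.I)) • (spinP n - (spinP n)ᴴ) :=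
  rfl

theorem spinMat_two (n : ℕ) :
    spinMat n 2 = (1 / 2 : ℂ) • ((createUp n)ᴴ * createUp n - (createDown n)ᴴ * createDown n) := by
  rw [conjTranspose_createUp_mul_self, conjTranspose_createDown_mul_self, diagonal_sub,
    ← diagonal_smul]
  refine congrArg diagonal (funext fun k ↦ ?_)
  rw [Pi.smul_apply, smul_eq_mul, spinVal]
  push_cast
  ring

theorem spinMat_succ_two (n : ℕ) :
    spinMat (n + 1) 2
      = (1 / 2 : ℂ) • (createUp n * (createUp n)ᴴ - createDown n * (createDown n)ᴴ) := by
  rw [createUp_mul_conjTranspose_self, createDown_mul_conjTranspose_self, diagonal_sub,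
    ← diagonal_smul]
  refine congrArg diagonal (funext fun k ↦ ?_)
  rw [Pi.smul_apply, smul_eq_mul, spinVal]
  push_cast
  ring

/-- The expectation value `⟨ψ|M|ψ⟩`. As a function of a coherent state `ψ` it is the lower symbol
of the operator `M`. -/
def expectation {m : Type*} [Fintype m] (ψ : m → ℂ) : Matrix m m ℂ →ₗ[ℂ] ℂ where
  toFun M := star ψ ⬝ᵥ M *ᵥ ψ
  map_add' M N := by rw [add_mulVec, dotProduct_add]
  map_smul' c M := by rw [smul_mulVec, dotProduct_smul, RingHom.id_apply]

theorem expectation_apply {m : Type*} [Fintype m] (ψ : m → ℂ) (M : Matrix m m ℂ) :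
    expectation ψ M = star ψ ⬝ᵥ M *ᵥ ψ :=
  rfl

theorem expectation_mul_conjTranspose {m k : Type*} [Fintype m] [Fintype k] (ψ : m → ℂ)
    (A B : Matrix m k ℂ) : expectation ψ (A * Bᴴ) = star (Aᴴ *ᵥ ψ) ⬝ᵥ Bᴴ *ᵥ ψ := by
  rw [expectation_apply, star_mulVec, conjTranspose_conjTranspose, ← mulVec_mulVec,
    dotProduct_mulVec]

theorem expectation_conjTranspose {m : Type*} [Fintype m] (ψ : m → ℂ) (M : Matrix m m ℂ) :
    expectation ψ Mᴴ = conj (expectation ψ M) := by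
  rw [expectation_apply, expectation_apply, starRingEnd_apply, star_dotProduct, star_mulVec,
    conjTranspose_conjTranspose, dotProduct_mulVec]

/-- The point of the Bloch sphere represented by the spinor `(a, b)`. -/
def blochVec (a b : ℂ) : EuclideanSpace ℝ (Fin 3) :=
  !₂[(2 * (conj a * b)).re, (2 * (conj a * b)).im, ‖a‖ ^ 2 - ‖b‖ ^ 2]

theorem norm_blochVec (a b : ℂ) : ‖blochVec a b‖ = ‖a‖ ^ 2 + ‖b‖ ^ 2 := by
  have hre_im : (2 * (conj a * b)).re ^ 2 + (2 * (conj a * b)).im ^ 2 = 4 * ‖a‖ ^ 2 * ‖b‖ ^ 2 := by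
    rw [← Complex.sq_norm_sub_sq_re, norm_mul, norm_mul, RCLike.norm_conj, Complex.norm_ofNat]
    ring
  rw [EuclideanSpace.norm_eq, Real.sqrt_eq_iff_eq_sq (by positivity) (by positivity),
    Fin.sum_univ_three]
  simp only [blochVec, Real.norm_eq_abs, sq_abs]
  change (2 * (conj a * b)).re ^ 2 + (2 * (conj a * b)).im ^ 2 + (‖a‖ ^ 2 - ‖b‖ ^ 2) ^ 2 = _
  linear_combination hre_im

theorem exists_blochVec_eq {Ω : EuclideanSpace ℝ (Fin 3)} (hΩ : ‖Ω‖ = 1) :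
    ∃ a b : ℂ, ‖a‖ ^ 2 + ‖b‖ ^ 2 = 1 ∧ blochVec a b = Ω := by
  have hsq : Ω 0 ^ 2 + Ω 1 ^ 2 + Ω 2 ^ 2 = 1 := by
    simpa [EuclideanSpace.norm_sq_eq, Fin.sum_univ_three, hΩ]
      using (EuclideanSpace.norm_sq_eq Ω).symm
  have hΩ2 : |Ω 2| ≤ 1 :=
    (sq_le_one_iff_abs_le_one _).1 (by nlinarith [sq_nonneg (Ω 0), sq_nonneg (Ω 1)])
  obtain ⟨hlow, hupp⟩ := abs_le.1 hΩ2
  set x := √((1 + Ω 2) / 2)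
  set y := √((1 - Ω 2) / 2)
  have hx2 : x ^ 2 = (1 + Ω 2) / 2 := Real.sq_sqrt (by linarith)
  have hy2 : y ^ 2 = (1 - Ω 2) / 2 := Real.sq_sqrt (by linarith)
  set ω : ℂ := ⟨Ω 0, Ω 1⟩
  have hω : ‖ω‖ = 2 * (x * y) := by
    rw [← sq_eq_sq₀ (by positivity) (by positivity), Complex.sq_norm, Complex.normSq_mk, mul_pow,
      mul_pow, hx2, hy2]
    linear_combination hsq
  have hphase : 2 * (conj (x : ℂ) * (y * Complex.exp (ω.arg * Complex.I))) = ω := by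
    rw [Complex.conj_ofReal, ← mul_assoc, ← mul_assoc, mul_assoc 2, ← Complex.ofReal_ofNat,
      ← Complex.ofReal_mul, ← Complex.ofReal_mul, ← hω, Complex.norm_mul_exp_arg_mul_I]
  have hnx : ‖(x : ℂ)‖ ^ 2 = (1 + Ω 2) / 2 := by
    rw [Complex.norm_real, Real.norm_eq_abs, sq_abs, hx2]
  have hny : ‖(y * Complex.exp (ω.arg * Complex.I) : ℂ)‖ ^ 2 = (1 - Ω 2) / 2 := by
    rw [norm_mul, Complex.norm_exp_ofReal_mul_I, mul_one, Complex.norm_real, Real.norm_eq_abs,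
      sq_abs, hy2]
  refine ⟨x, y * Complex.exp (ω.arg * Complex.I), by rw [hnx, hny]; ring, ?_⟩
  rw [blochVec, hphase, hnx, hny]
  ext α
  match α with
  | 0 => rfl
  | 1 => rfl
  | 2 =>
    change (1 + Ω 2) / 2 - (1 - Ω 2) / 2 = Ω 2
    ring

theorem expectation_coherentVec_mul_conjTranspose {n : ℕ} {a b : ℂ}
    (hab : ‖a‖ ^ 2 + ‖b‖ ^ 2 = 1) {A B : Matrix (Fin (n + 2)) (Fin (n + 1)) ℂ} {s t : ℂ}
    (hA : Aᴴ *ᵥ coherentVec (n + 1) a b = (√(n + 1 : ℝ) * s) • coherentVec n a b)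
    (hB : Bᴴ *ᵥ coherentVec (n + 1) a b = (√(n + 1 : ℝ) * t) • coherentVec n a b) :
    expectation (coherentVec (n + 1) a b) (A * Bᴴ)
      = spinVal (n + 1) * (2 * (conj s * t)) := by
  have hsqrt : (√(n + 1 : ℝ) : ℂ) * √(n + 1 : ℝ) = 2 * spinVal (n + 1) := by
    rw [ofReal_sqrt_mul_self (by positivity), spinVal]
    push_cast
    ring
  have hnorm : star (coherentVec n a b) ⬝ᵥ coherentVec n a b = 1 := by
    rw [star_coherentVec_dotProduct_self, hab, one_pow, Complex.ofReal_one]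
  rw [expectation_mul_conjTranspose, hA, hB, star_smul, smul_dotProduct, dotProduct_smul, hnorm,
    Complex.star_def, map_mul, Complex.conj_ofReal]
  simp only [smul_eq_mul]
  linear_combination (conj s * t) * hsqrt

theorem expectation_spinMat_coherentVec (n : ℕ) {a b : ℂ} (hab : ‖a‖ ^ 2 + ‖b‖ ^ 2 = 1)
    (α : Fin 3) :
    expectation (coherentVec (n + 1) a b) (spinMat (n + 1) α)
      = (spinVal (n + 1) * blochVec a b α : ℝ) := by
  set c := coherentVec (n + 1) a b
  have hup := conjTranspose_createUp_mulVec_coherentVec n a b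
  have hdown := conjTranspose_createDown_mulVec_coherentVec n a b
  have hplus : expectation c (spinP (n + 1)) = spinVal (n + 1) * (2 * (conj a * b)) := by
    rw [spinP_succ_eq_createUp_mul_conjTranspose_createDown,
      expectation_coherentVec_mul_conjTranspose hab hup hdown]
  rw [Complex.ofReal_mul]
  match α with
  | 0 =>
    change _ = _ * ((2 * (conj a * b)).re : ℂ)
    rw [spinMat_zero, map_smul, map_add, expectation_conjTranspose, hplus, map_mul,
      Complex.conj_ofReal, Complex.re_eq_add_conj, smul_eq_mul]
    ring
  | 1 =>
    change _ = _ * ((2 * (conj a * b)).im : ℂ)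
    rw [spinMat_one, map_smul, map_sub, expectation_conjTranspose, hplus, map_mul,
      Complex.conj_ofReal, Complex.im_eq_sub_conj, smul_eq_mul]
    ring
  | 2 =>
    change _ = _ * ((‖a‖ ^ 2 - ‖b‖ ^ 2 : ℝ) : ℂ)
    rw [spinMat_succ_two, map_smul, map_sub,
      expectation_coherentVec_mul_conjTranspose hab hup hup,
      expectation_coherentVec_mul_conjTranspose hab hdown hdown, Complex.conj_mul',
      Complex.conj_mul', smul_eq_mul]
    push_cast
    ring

theorem exists_expectation_spinMat_eq (n : ℕ) {Ω : EuclideanSpace ℝ (Fin 3)} (hΩ : ‖Ω‖ = 1) :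
    ∃ c : Fin (n + 2) → ℂ, star c ⬝ᵥ c = 1 ∧
      ∀ α, expectation c (spinMat (n + 1) α) = (spinVal (n + 1) * Ω α : ℝ) := by
  obtain ⟨a, b, hab, rfl⟩ := exists_blochVec_eq hΩ
  refine ⟨coherentVec (n + 1) a b, ?_, expectation_spinMat_coherentVec n hab⟩
  rw [star_coherentVec_dotProduct_self, hab, one_pow, Complex.ofReal_one]

theorem integral_unitInterval {E : Type*} [NormedAddCommGroup E] [NormedSpace ℝ E] (f : ℝ → E) :
    ∫ u : unitInterval, f u = ∫ u in (0 : ℝ)..1, f u := by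
  rw [intervalIntegral.integral_of_le zero_le_one, ← integral_Icc_eq_integral_Ioc]
  exact integral_subtype measurableSet_Icc f

/-- The normalised spinor with relative phase `θ` and probability `u` of being up. By Archimedes'
theorem, uniformly distributed `(θ, u)` give a uniformly distributed point of the Bloch sphere. -/
def spinor (x : UnitAddCircle × unitInterval) : ℂ × ℂ :=
  (√(x.2 : ℝ) * fourier 1 x.1, √(1 - x.2 : ℝ))

theorem continuous_spinor : Continuous spinor := by
  unfold spinor
  fun_prop

theorem norm_sq_spinor (x : UnitAddCircle × unitInterval) :
    ‖(spinor x).1‖ ^ 2 + ‖(spinor x).2‖ ^ 2 = 1 := by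
  rw [spinor, norm_mul, fourier_apply, Circle.norm_coe, mul_one, Complex.norm_real,
    Complex.norm_real, Real.norm_eq_abs, Real.norm_eq_abs, sq_abs, sq_abs, Real.sq_sqrt x.2.2.1,
    Real.sq_sqrt (sub_nonneg.2 x.2.2.2), add_sub_cancel]

theorem integral_coherentVec_spinor_mul_conj (n : ℕ) (j k : Fin (n + 1)) :
    ∫ x, coherentVec n (spinor x).1 (spinor x).2 j
        * conj (coherentVec n (spinor x).1 (spinor x).2 k) ∂(AddCircle.haarAddCircle.prod volume)
      = if j = k then (n + 1 : ℂ)⁻¹ else 0 := by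
  let g (u : ℝ) : ℝ := √(n.choose j) * √(n.choose k) *
    (√u ^ (j : ℕ) * √u ^ (k : ℕ) * (√(1 - u) ^ (n - j) * √(1 - u) ^ (n - k)))
  have hsplit (x : UnitAddCircle × unitInterval) :
      coherentVec n (spinor x).1 (spinor x).2 j * conj (coherentVec n (spinor x).1 (spinor x).2 k)
        = fourier ((j : ℤ) - k) x.1 * (g x.2 : ℂ) := by
    have hpow (m : ℕ) : fourier 1 x.1 ^ m = fourier (m : ℤ) x.1 := by
      rw [fourier_apply, fourier_apply, one_smul, natCast_zsmul, AddCircle.toCircle_nsmul,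
        Circle.coe_pow]
    simp only [coherentVec, spinor, map_mul, map_pow, Complex.conj_ofReal, mul_pow,
      sub_eq_add_neg (j : ℤ), fourier_add, fourier_neg, g, ← hpow]
    push_cast
    ring
  simp only [hsplit]
  rw [integral_prod_mul (fun θ ↦ fourier ((j : ℤ) - k) θ) (fun u : unitInterval ↦ (g u : ℂ)),
    integral_fourier, ite_mul, zero_mul, one_mul]
  refine if_ctx_congr (by rw [sub_eq_zero, Nat.cast_inj, Fin.ext_iff]) (fun h ↦ ?_) fun _ ↦ rfl
  have hk : (k : ℕ) ≤ n := Nat.lt_succ_iff.1 k.is_lt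
  have hg (u : unitInterval) : g u = n.choose k * ((u : ℝ) ^ (k : ℕ) * (1 - u) ^ (n - k)) := by
    simp only [g, h]
    rw [Real.mul_self_sqrt (by positivity), ← mul_pow, ← mul_pow, Real.mul_self_sqrt u.2.1,
      Real.mul_self_sqrt (sub_nonneg.2 u.2.2)]
  have hfactorial : (n.choose k * k ! * (n - k : ℕ)! : ℝ) = n ! :=
    mod_cast Nat.choose_mul_factorial_mul_factorial hk
  simp only [hg]
  rw [integral_complex_ofReal, integral_const_mul,
    integral_unitInterval (fun u ↦ u ^ (k : ℕ) * (1 - u) ^ (n - k)), integral_pow_mul_one_sub_pow,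
    Nat.add_sub_cancel' hk, ← mul_div_assoc, ← mul_assoc, hfactorial, Nat.factorial_succ]
  push_cast
  rw [mul_comm (_ + _), div_mul_cancel_left₀ (Nat.cast_ne_zero.2 n.factorial_ne_zero)]

theorem exists_spinor_quadrature (n : ℕ) :
    ∃ (ι : Type) (_ : Fintype ι) (p : ι → ℝ) (x : ι → UnitAddCircle × unitInterval),
      (∀ t, 0 ≤ p t) ∧ ∀ j k, ∑ t, (p t : ℂ) * (coherentVec n (spinor (x t)).1 (spinor (x t)).2 j
        * conj (coherentVec n (spinor (x t)).1 (spinor (x t)).2 k))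
        = if j = k then (n + 1 : ℂ)⁻¹ else 0 := by
  let F (x : UnitAddCircle × unitInterval) (j k : Fin (n + 1)) : ℂ :=
    coherentVec n (spinor x).1 (spinor x).2 j * conj (coherentVec n (spinor x).1 (spinor x).2 k)
  have hF : Continuous F := by
    have := continuous_spinor
    unfold F coherentVec
    fun_prop
  let μ := (AddCircle.haarAddCircle (T := 1)).prod (volume : Measure unitInterval)
  have integrable_of_continuous {E : Type} [NormedAddCommGroup E]
      {f : UnitAddCircle × unitInterval → E} (hf : Continuous f) : Integrable f μ :=
    hf.integrable_of_hasCompactSupport (.of_compactSpace f)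
  obtain ⟨ι, _, p, x, hp, hsum⟩ := exists_quadrature μ hF
  refine ⟨ι, inferInstance, p, x, hp, fun j k ↦ ?_⟩
  calc ∑ t, (p t : ℂ) * F (x t) j k
      = (∫ x, F x ∂μ) j k := by
        rw [← hsum]
        simp only [Finset.sum_apply, Pi.smul_apply, Complex.real_smul]
    _ = ∫ x, F x j k ∂μ := by
        rw [eval_integral fun j ↦ integrable_of_continuous (by fun_prop),
          eval_integral fun k ↦ integrable_of_continuous (by fun_prop)]
    _ = if j = k then (n + 1 : ℂ)⁻¹ else 0 := integral_coherentVec_spinor_mul_conj n j k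

/-- The matrix whose columns are coherent states of spin `n/2`, the one with spinor `(a t, b t)`
scaled by the square root of `n + 1` times its quadrature weight `p t`. -/
def coherentFrame {ι : Type*} (n : ℕ) (p : ι → ℝ) (a b : ι → ℂ) : Matrix (Fin (n + 1)) ι ℂ :=
  of fun k t ↦ √((n + 1) * p t) * coherentVec n (a t) (b t) k

theorem exists_coherentFrame_mul_conjTranspose_eq_one (n : ℕ) :
    ∃ (ι : Type) (_ : Fintype ι) (p : ι → ℝ) (a b : ι → ℂ),
      (∀ t, ‖a t‖ ^ 2 + ‖b t‖ ^ 2 = 1) ∧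
        coherentFrame n p a b * (coherentFrame n p a b)ᴴ = 1 := by
  obtain ⟨ι, _, p, x, hp, hsum⟩ := exists_spinor_quadrature n
  refine ⟨ι, inferInstance, p, fun t ↦ (spinor (x t)).1, fun t ↦ (spinor (x t)).2,
    fun t ↦ norm_sq_spinor (x t), ?_⟩
  ext j k
  have hweight (t : ι) : (√((n + 1) * p t) : ℂ) * √((n + 1) * p t) = (n + 1) * p t := by
    rw [ofReal_sqrt_mul_self (mul_nonneg (by positivity) (hp t))]
    push_cast
    rfl
  calc (coherentFrame n p _ _ * (coherentFrame n p _ _)ᴴ) j k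
      = (n + 1) * ∑ t, p t * (coherentVec n (spinor (x t)).1 (spinor (x t)).2 j
          * conj (coherentVec n (spinor (x t)).1 (spinor (x t)).2 k)) := by
        rw [mul_apply, Finset.mul_sum]
        refine Finset.sum_congr rfl fun t _ ↦ ?_
        rw [conjTranspose_apply, coherentFrame, of_apply, of_apply, Complex.star_def, map_mul,
          Complex.conj_ofReal]
        linear_combination (coherentVec n (spinor (x t)).1 (spinor (x t)).2 j
          * conj (coherentVec n (spinor (x t)).1 (spinor (x t)).2 k)) * hweight t
    _ = (1 : Matrix _ _ ℂ) j k := by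
        rw [hsum, one_apply, mul_ite, mul_zero, mul_inv_cancel₀ (Nat.cast_add_one_ne_zero n)]

section UpperSymbol

variable {m k ι : Type*} [Fintype ι] [DecidableEq ι]

/-- The operator `∑ t, f t • |C t⟩⟨C t|` with upper symbol `f` with respect to the vectors `C t`,
the columns of `C`. -/
def symbolOp (C : Matrix m ι ℂ) : (ι → ℂ) →ₗ[ℂ] Matrix m m ℂ where
  toFun f := C * diagonal f * Cᴴ
  map_add' f g := by rw [← Matrix.add_mul, ← Matrix.mul_add, diagonal_add]; rfl
  map_smul' c f := by rw [diagonal_smul, Matrix.mul_smul, Matrix.smul_mul, RingHom.id_apply]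

theorem symbolOp_apply (C : Matrix m ι ℂ) (f : ι → ℂ) : symbolOp C f = C * diagonal f * Cᴴ :=
  rfl

theorem symbolOp_one (C : Matrix m ι ℂ) : symbolOp C 1 = C * Cᴴ := by
  rw [symbolOp_apply, Pi.one_def, diagonal_one, Matrix.mul_one]

theorem symbolOp_star (C : Matrix m ι ℂ) (f : ι → ℂ) : symbolOp C (star f) = (symbolOp C f)ᴴ := by
  simp only [symbolOp_apply, conjTranspose_mul, conjTranspose_conjTranspose,
    diagonal_conjTranspose, Matrix.mul_assoc]

theorem isHermitian_symbolOp_ofReal (C : Matrix m ι ℂ) (f : ι → ℝ) :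
    (symbolOp C fun t ↦ (f t : ℂ)).IsHermitian := by
  rw [IsHermitian, ← symbolOp_star]
  exact congrArg _ (funext fun t ↦ Complex.conj_ofReal (f t))

theorem posSemidef_symbolOp_ofReal [Finite m] (C : Matrix m ι ℂ) {f : ι → ℝ} (hf : ∀ t, 0 ≤ f t) :
    (symbolOp C fun t ↦ (f t : ℂ)).PosSemidef :=
  (PosSemidef.diagonal fun t ↦ Complex.zero_le_real.2 (hf t)).mul_mul_conjTranspose_same C

-- Insert `D * Dᴴ = 1` between the two factors: this is why antinormally ordered products have
-- explicit upper symbols.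
theorem conjTranspose_mul_eq_symbolOp [Fintype m] [DecidableEq m] {D : Matrix m ι ℂ}
    (hD : D * Dᴴ = 1) {C : Matrix k ι ℂ} {A B : Matrix m k ℂ} {f g : ι → ℂ}
    (hA : Aᴴ * D = C * diagonal f) (hB : Bᴴ * D = C * diagonal g) :
    Aᴴ * B = symbolOp C (f * star g) := by
  calc Aᴴ * B = Aᴴ * D * (Bᴴ * D)ᴴ := by
        rw [conjTranspose_mul, conjTranspose_conjTranspose, Matrix.mul_assoc,
          ← Matrix.mul_assoc _ _ B, hD, Matrix.one_mul]
    _ = C * (diagonal f * diagonal (star g)) * Cᴴ := by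
        rw [hA, hB, conjTranspose_mul, diagonal_conjTranspose]
        simp only [Matrix.mul_assoc]
    _ = symbolOp C (f * star g) := by
        rw [diagonal_mul_diagonal]
        rfl

end UpperSymbol

section SpinFrame

variable {ι : Type*} [Fintype ι] (n : ℕ) (p : ι → ℝ) (a b : ι → ℂ)

theorem conjTranspose_mul_coherentFrame [DecidableEq ι]
    {A : Matrix (Fin (n + 2)) (Fin (n + 1)) ℂ} {s : ι → ℂ}
    (hA : ∀ t, Aᴴ *ᵥ coherentVec (n + 1) (a t) (b t)
      = (√(n + 1 : ℝ) * s t) • coherentVec n (a t) (b t)) :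
    Aᴴ * coherentFrame (n + 1) p a b
      = coherentFrame n p a b * diagonal fun t ↦ √(n + 2 : ℝ) * s t := by
  ext k t
  have hsqrt : √(((n + 1 : ℕ) + 1) * p t) * √(n + 1 : ℝ) = √((n + 1) * p t) * √(n + 2 : ℝ) := by
    rw [Real.sqrt_mul (by positivity), Real.sqrt_mul (by positivity)]
    push_cast
    ring_nf
  calc (Aᴴ * coherentFrame (n + 1) p a b) k t
      = √(((n + 1 : ℕ) + 1) * p t) * (Aᴴ *ᵥ coherentVec (n + 1) (a t) (b t)) k := by
        simp only [mul_apply, coherentFrame, of_apply, mulVec, dotProduct, Finset.mul_sum]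
        exact Finset.sum_congr rfl fun _ _ ↦ mul_left_comm ..
    _ = (√((n + 1) * p t) * √(n + 2 : ℝ) : ℝ) * s t * coherentVec n (a t) (b t) k := by
        rw [hA, ← hsqrt, Pi.smul_apply, smul_eq_mul]
        push_cast
        ring
    _ = (coherentFrame n p a b * diagonal fun t ↦ √(n + 2 : ℝ) * s t) k t := by
        rw [mul_diagonal, coherentFrame, of_apply]
        push_cast
        ring

variable {p a b}

theorem conjTranspose_mul_eq_symbolOp_coherentFrame [DecidableEq ι]
    (hone : coherentFrame (n + 1) p a b * (coherentFrame (n + 1) p a b)ᴴ = 1)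
    {A B : Matrix (Fin (n + 2)) (Fin (n + 1)) ℂ} {s r : ι → ℂ}
    (hA : ∀ t, Aᴴ *ᵥ coherentVec (n + 1) (a t) (b t)
      = (√(n + 1 : ℝ) * s t) • coherentVec n (a t) (b t))
    (hB : ∀ t, Bᴴ *ᵥ coherentVec (n + 1) (a t) (b t)
      = (√(n + 1 : ℝ) * r t) • coherentVec n (a t) (b t)) :
    Aᴴ * B
      = symbolOp (coherentFrame n p a b) fun t ↦ (spinVal n + 1) * (2 * (s t * conj (r t))) := by
  have hsqrt : (√(n + 2 : ℝ) : ℂ) * √(n + 2 : ℝ) = n + 2 := by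
    rw [ofReal_sqrt_mul_self (by positivity)]
    norm_num
  rw [conjTranspose_mul_eq_symbolOp hone (conjTranspose_mul_coherentFrame n p a b hA)
    (conjTranspose_mul_coherentFrame n p a b hB)]
  refine congrArg _ (funext fun t ↦ ?_)
  rw [Pi.mul_apply, Pi.star_apply, Complex.star_def, map_mul, Complex.conj_ofReal, spinVal]
  push_cast
  linear_combination (s t * conj (r t)) * hsqrt

theorem coherentFrame_mul_conjTranspose_eq_one_of_succ (hab : ∀ t, ‖a t‖ ^ 2 + ‖b t‖ ^ 2 = 1)
    (hone : coherentFrame (n + 1) p a b * (coherentFrame (n + 1) p a b)ᴴ = 1) :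
    coherentFrame n p a b * (coherentFrame n p a b)ᴴ = 1 := by
  classical
  have hn : (n + 2 : ℂ) ≠ 0 := mod_cast (n + 1).succ_ne_zero
  refine smul_right_injective _ hn ?_
  calc (n + 2 : ℂ) • (coherentFrame n p a b * (coherentFrame n p a b)ᴴ)
      = (createUp n)ᴴ * createUp n + (createDown n)ᴴ * createDown n := by
        have hup (t : ι) := conjTranspose_createUp_mulVec_coherentVec n (a t) (b t)
        have hdown (t : ι) := conjTranspose_createDown_mulVec_coherentVec n (a t) (b t)
        rw [conjTranspose_mul_eq_symbolOp_coherentFrame n hone hup hup,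
          conjTranspose_mul_eq_symbolOp_coherentFrame n hone hdown hdown, ← map_add,
          ← symbolOp_one, ← map_smul]
        refine congrArg _ (funext fun t ↦ ?_)
        have hab' := congrArg Complex.ofReal (hab t)
        rw [Pi.add_apply, Pi.smul_apply, Pi.one_apply, smul_eq_mul, Complex.mul_conj',
          Complex.mul_conj', spinVal]
        push_cast at hab' ⊢
        linear_combination -(n + 2) * hab'
    _ = (n + 2 : ℂ) • 1 := by
        rw [conjTranspose_createUp_mul_self, conjTranspose_createDown_mul_self, diagonal_add,
          smul_one_eq_diagonal]
        exact congrArg diagonal (funext fun k ↦ by ring)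

theorem symbolOp_coherentFrame_blochVec [DecidableEq ι]
    (hone : coherentFrame (n + 1) p a b * (coherentFrame (n + 1) p a b)ᴴ = 1) (α : Fin 3) :
    symbolOp (coherentFrame n p a b) (fun t ↦ ((spinVal n + 1) * blochVec (a t) (b t) α : ℝ))
      = spinMat n α := by
  have hup (t : ι) := conjTranspose_createUp_mulVec_coherentVec n (a t) (b t)
  have hdown (t : ι) := conjTranspose_createDown_mulVec_coherentVec n (a t) (b t)
  have hplus := conjTranspose_mul_eq_symbolOp_coherentFrame n hone hdown hup
  rw [← spinP_eq_conjTranspose_createDown_mul_createUp] at hplus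
  have hconj (t : ι) : conj ((spinVal n + 1 : ℂ) * (2 * (b t * conj (a t))))
      = (spinVal n + 1) * conj (2 * (b t * conj (a t))) := by
    rw [map_mul, map_add, Complex.conj_ofReal, map_one]
  match α with
  | 0 =>
    rw [spinMat_zero, hplus, ← symbolOp_star, ← map_add, ← map_smul]
    refine congrArg _ (funext fun t ↦ ?_)
    change (((spinVal n + 1) * (2 * (conj (a t) * b t)).re : ℝ) : ℂ) = 1 / 2 * (_ + conj _)
    rw [hconj, Complex.ofReal_mul, Complex.re_eq_add_conj, mul_comm (b t)]
    push_cast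
    ring
  | 1 =>
    rw [spinMat_one, hplus, ← symbolOp_star, ← map_sub, ← map_smul]
    refine congrArg _ (funext fun t ↦ ?_)
    change (((spinVal n + 1) * (2 * (conj (a t) * b t)).im : ℝ) : ℂ)
      = 1 / (2 * Complex.I) * (_ - conj _)
    rw [hconj, Complex.ofReal_mul, Complex.im_eq_sub_conj, mul_comm (b t)]
    push_cast
    ring
  | 2 =>
    rw [spinMat_two, conjTranspose_mul_eq_symbolOp_coherentFrame n hone hup hup,
      conjTranspose_mul_eq_symbolOp_coherentFrame n hone hdown hdown, ← map_sub, ← map_smul]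
    refine congrArg _ (funext fun t ↦ ?_)
    change (((spinVal n + 1) * (‖a t‖ ^ 2 - ‖b t‖ ^ 2) : ℝ) : ℂ)
      = 1 / 2 * (_ * (2 * (a t * conj (a t))) - _ * (2 * (b t * conj (b t))))
    rw [Complex.mul_conj', Complex.mul_conj']
    push_cast
    ring

end SpinFrame

theorem exists_spin_frame (n : ℕ) :
    ∃ (ι : Type) (_ : Fintype ι) (_ : DecidableEq ι) (C : Matrix (Fin (n + 1)) ι ℂ)
      (Ω : ι → EuclideanSpace ℝ (Fin 3)), (∀ t, ‖Ω t‖ = 1) ∧ C * Cᴴ = 1 ∧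
        ∀ α, symbolOp C (fun t ↦ ((spinVal n + 1) * Ω t α : ℝ)) = spinMat n α := by
  classical
  obtain ⟨ι, _, p, a, b, hab, hone⟩ := exists_coherentFrame_mul_conjTranspose_eq_one (n + 1)
  exact ⟨ι, inferInstance, inferInstance, coherentFrame n p a b, fun t ↦ blochVec (a t) (b t),
    fun t ↦ (norm_blochVec _ _).trans (hab t),
    coherentFrame_mul_conjTranspose_eq_one_of_succ n hab hone,
    symbolOp_coherentFrame_blochVec n hone⟩

section TensorProduct

variable {V : Type*} [Fintype V] {R : Type*} [CommSemiring R] {m k l : Type*}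

/-- The tensor product over the sites `V` of the vectors `c i`, as a function on configurations. -/
def tensorVec (c : V → m → R) : (V → m) → R :=
  fun x ↦ ∏ i, c i (x i)

/-- The tensor product over the sites `V` of the matrices `A i`, indexed by configurations. -/
def tensorMat (A : V → Matrix m k R) : Matrix (V → m) (V → k) R :=
  of fun x y ↦ ∏ i, A i (x i) (y i)

theorem tensorMat_diagonal [DecidableEq m] (d : V → m → R) :
    tensorMat (fun i ↦ diagonal (d i)) = diagonal (tensorVec d) := by
  ext x y
  simp only [tensorMat, tensorVec, of_apply, diagonal_apply, Finset.prod_ite_zero,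
    Finset.mem_univ, true_imp_iff, funext_iff]

theorem tensorMat_one [DecidableEq m] : tensorMat (fun _ : V ↦ (1 : Matrix m m R)) = 1 := by
  simp only [← diagonal_one, tensorMat_diagonal]
  exact congrArg diagonal (funext fun _ ↦ Finset.prod_const_one)

variable [DecidableEq V]

theorem tensorVec_dotProduct_tensorVec [Fintype m] (c d : V → m → R) :
    tensorVec c ⬝ᵥ tensorVec d = ∏ i, c i ⬝ᵥ d i := by
  simp only [dotProduct, tensorVec, ← Finset.prod_mul_distrib, Fintype.prod_sum]

theorem tensorMat_mul_tensorMat [Fintype k] (A : V → Matrix m k R) (B : V → Matrix k l R) :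
    tensorMat A * tensorMat B = tensorMat fun i ↦ A i * B i := by
  ext x y
  simp only [mul_apply, tensorMat, of_apply, ← Finset.prod_mul_distrib, Fintype.prod_sum]

theorem tensorMat_mulVec_tensorVec [Fintype k] (A : V → Matrix m k R) (c : V → k → R) :
    tensorMat A *ᵥ tensorVec c = tensorVec fun i ↦ A i *ᵥ c i := by
  ext x
  simp only [mulVec, dotProduct, tensorMat, tensorVec, of_apply, ← Finset.prod_mul_distrib,
    Fintype.prod_sum]

end TensorProduct

theorem star_tensorVec {V m R : Type*} [Fintype V] [CommSemiring R] [StarRing R] (c : V → m → R) :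
    star (tensorVec c) = tensorVec fun i ↦ star (c i) :=
  funext fun x ↦ map_prod (starRingEnd R) (fun i ↦ c i (x i)) Finset.univ

theorem tensorMat_conjTranspose {V m k R : Type*} [Fintype V] [CommSemiring R] [StarRing R]
    (A : V → Matrix m k R) : (tensorMat A)ᴴ = tensorMat fun i ↦ (A i)ᴴ :=
  ext fun x y ↦ map_prod (starRingEnd R) (fun i ↦ A i (y i) (x i)) Finset.univ

section PairProduct

variable {V M : Type*} [DecidableEq V] [MulOneClass M] {i j : V}

theorem mulSingle_mul_mulSingle_left (hij : i ≠ j)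
    (a b : M) : (Pi.mulSingle i a * Pi.mulSingle j b : V → M) i = a := by
  rw [Pi.mul_apply, Pi.mulSingle_eq_same, Pi.mulSingle_eq_of_ne hij, mul_one]

theorem mulSingle_mul_mulSingle_right (hij : i ≠ j)
    (a b : M) : (Pi.mulSingle i a * Pi.mulSingle j b : V → M) j = b := by
  rw [Pi.mul_apply, Pi.mulSingle_eq_same, Pi.mulSingle_eq_of_ne hij.symm, one_mul]

theorem mulSingle_mul_mulSingle_of_ne {l : V} (hl : l ≠ i ∧ l ≠ j) (a b : M) :
    (Pi.mulSingle i a * Pi.mulSingle j b : V → M) l = 1 := by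
  rw [Pi.mul_apply, Pi.mulSingle_eq_of_ne hl.1, Pi.mulSingle_eq_of_ne hl.2, one_mul]

end PairProduct

section ProductSymbols

variable {V : Type*} [Fintype V] [DecidableEq V]

theorem expectation_tensorVec_tensorMat {m : Type*} [Fintype m] (c : V → m → ℂ)
    (A : V → Matrix m m ℂ) :
    expectation (tensorVec c) (tensorMat A) = ∏ i, expectation (c i) (A i) := by
  simp only [expectation_apply, tensorMat_mulVec_tensorVec, star_tensorVec,
    tensorVec_dotProduct_tensorVec]

theorem symbolOp_tensorMat {m ι : Type*} [Fintype ι] [DecidableEq ι] (C : V → Matrix m ι ℂ)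
    (f : V → ι → ℂ) :
    symbolOp (tensorMat C) (tensorVec f) = tensorMat fun i ↦ symbolOp (C i) (f i) := by
  simp only [symbolOp_apply, tensorMat_conjTranspose, ← tensorMat_diagonal,
    tensorMat_mul_tensorMat]

variable {n : ℕ}

theorem siteOp_eq_tensorMat (i : V) (A : Matrix (Fin (n + 1)) (Fin (n + 1)) ℂ) :
    siteOp n i A = tensorMat (Pi.mulSingle i A) := by
  ext x y
  by_cases h : ∀ j, j ≠ i → x j = y j
  · rw [siteOp, if_pos h, tensorMat, of_apply, Fintype.prod_eq_single i fun j hj ↦ by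
      rw [Pi.mulSingle_eq_of_ne hj, h j hj, one_apply_eq], Pi.mulSingle_eq_same]
  · rw [siteOp, if_neg h]
    push Not at h
    obtain ⟨j, hj, hxy⟩ := h
    exact (Finset.prod_eq_zero (Finset.mem_univ j)
      (by rw [Pi.mulSingle_eq_of_ne hj, one_apply_ne hxy])).symm

theorem siteOp_mul_siteOp (i j : V) (A B : Matrix (Fin (n + 1)) (Fin (n + 1)) ℂ) :
    siteOp n i A * siteOp n j B = tensorMat (Pi.mulSingle i A * Pi.mulSingle j B) := by
  rw [siteOp_eq_tensorMat, siteOp_eq_tensorMat, tensorMat_mul_tensorMat, Pi.mul_def]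

theorem expectation_tensorVec_siteOp_mul_siteOp {c : V → Fin (n + 1) → ℂ}
    (hc : ∀ l, star (c l) ⬝ᵥ c l = 1) {i j : V} (hij : i ≠ j)
    (A B : Matrix (Fin (n + 1)) (Fin (n + 1)) ℂ) :
    expectation (tensorVec c) (siteOp n i A * siteOp n j B)
      = expectation (c i) A * expectation (c j) B := by
  rw [siteOp_mul_siteOp, expectation_tensorVec_tensorMat, Fintype.prod_eq_mul i j hij fun l hl ↦ by
      rw [mulSingle_mul_mulSingle_of_ne hl, expectation_apply, one_mulVec, hc],
    mulSingle_mul_mulSingle_left hij, mulSingle_mul_mulSingle_right hij]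

variable {ι : Type*} [Fintype ι] [DecidableEq ι] {C : Matrix (Fin (n + 1)) ι ℂ}

theorem symbolOp_tensorMat_mul (hC : C * Cᴴ = 1) {i j : V} (hij : i ≠ j) (f g : ι → ℂ) :
    symbolOp (tensorMat fun _ : V ↦ C) (fun κ ↦ f (κ i) * g (κ j))
      = siteOp n i (symbolOp C f) * siteOp n j (symbolOp C g) := by
  have hsymbol : (fun κ : V → ι ↦ f (κ i) * g (κ j))
      = tensorVec (Pi.mulSingle i f * Pi.mulSingle j g) := by
    ext κ
    rw [tensorVec, Fintype.prod_eq_mul i j hij fun l hl ↦ by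
        rw [mulSingle_mul_mulSingle_of_ne hl, Pi.one_apply],
      mulSingle_mul_mulSingle_left hij, mulSingle_mul_mulSingle_right hij]
  rw [hsymbol, symbolOp_tensorMat, siteOp_mul_siteOp]
  congr 1 with l : 1
  by_cases hi : l = i
  · rw [hi, mulSingle_mul_mulSingle_left hij, mulSingle_mul_mulSingle_left hij]
  by_cases hj : l = j
  · rw [hj, mulSingle_mul_mulSingle_right hij, mulSingle_mul_mulSingle_right hij]
  · rw [mulSingle_mul_mulSingle_of_ne ⟨hi, hj⟩, mulSingle_mul_mulSingle_of_ne ⟨hi, hj⟩,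
      symbolOp_one, hC]

end ProductSymbols

section Heisenberg

theorem ofReal_sq_mul_inner (s : ℝ) (u v : EuclideanSpace ℝ (Fin 3)) :
    ((s ^ 2 * ⟪u, v⟫ : ℝ) : ℂ) = ∑ α, ((s * u α : ℝ) : ℂ) * ((s * v α : ℝ) : ℂ) := by
  rw [PiLp.inner_apply, Finset.mul_sum, Complex.ofReal_sum]
  refine Finset.sum_congr rfl fun α _ ↦ ?_
  rw [Real.inner_apply]
  push_cast
  ring

variable {V : Type*} [Fintype V]

theorem ofReal_mul_chaEnergy (n : ℕ) (s : ℝ) (w : V → V → ℝ)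
    (Ω : V → EuclideanSpace ℝ (Fin 3)) :
    (((s / spinVal n) ^ 2 * chaEnergy w Ω : ℝ) : ℂ)
      = ((1 / (4 * spinVal n ^ 2) : ℝ) : ℂ)
        * ∑ i, ∑ j, (w i j : ℂ) * ((s ^ 2 * ⟪Ω i, Ω j⟫ : ℝ) : ℂ) := by
  simp only [← Complex.ofReal_mul, ← Complex.ofReal_sum, mul_left_comm _ (s ^ 2),
    ← Finset.mul_sum, chaEnergy]
  ring_nf

variable [DecidableEq V] {n : ℕ} {s : ℝ}

theorem expectation_tensorVec_heis {c : V → Fin (n + 1) → ℂ} (hc : ∀ l, star (c l) ⬝ᵥ c l = 1)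
    {Ω : V → EuclideanSpace ℝ (Fin 3)}
    (hΩ : ∀ l α, expectation (c l) (spinMat n α) = (s * Ω l α : ℝ)) {i j : V} (hij : i ≠ j) :
    expectation (tensorVec c) (heis n i j) = (s ^ 2 * ⟪Ω i, Ω j⟫ : ℝ) := by
  simp only [heis, map_sum, expectation_tensorVec_siteOp_mul_siteOp hc hij, hΩ,
    ofReal_sq_mul_inner]

theorem symbolOp_tensorMat_inner {ι : Type*} [Fintype ι] [DecidableEq ι]
    {C : Matrix (Fin (n + 1)) ι ℂ} (hC : C * Cᴴ = 1) {Ω : ι → EuclideanSpace ℝ (Fin 3)}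
    (hΩ : ∀ α, symbolOp C (fun t ↦ (s * Ω t α : ℝ)) = spinMat n α) {i j : V} (hij : i ≠ j) :
    symbolOp (tensorMat fun _ : V ↦ C) (fun κ ↦ (s ^ 2 * ⟪Ω (κ i), Ω (κ j)⟫ : ℝ))
      = heis n i j := by
  simp only [heis, ← hΩ, ← symbolOp_tensorMat_mul hC hij, ← map_sum]
  refine congrArg _ (funext fun κ ↦ ?_)
  rw [ofReal_sq_mul_inner, Finset.sum_apply]

theorem expectation_tensorVec_hQHA {w : V → V → ℝ} (hloop : ∀ i, w i i = 0)
    {c : V → Fin (n + 1) → ℂ} (hc : ∀ l, star (c l) ⬝ᵥ c l = 1)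
    {Ω : V → EuclideanSpace ℝ (Fin 3)}
    (hΩ : ∀ l α, expectation (c l) (spinMat n α) = (s * Ω l α : ℝ)) :
    expectation (tensorVec c) (hQHA n w) = ((s / spinVal n) ^ 2 * chaEnergy w Ω : ℝ) := by
  simp only [hQHA, ofReal_mul_chaEnergy, map_smul, map_sum, smul_eq_mul]
  refine congrArg _ (Finset.sum_congr rfl fun i _ ↦ Finset.sum_congr rfl fun j _ ↦ ?_)
  obtain rfl | hij := eq_or_ne i j
  · rw [hloop, Complex.ofReal_zero, zero_mul, zero_mul]
  · rw [expectation_tensorVec_heis hc hΩ hij]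

theorem symbolOp_tensorMat_chaEnergy {w : V → V → ℝ} (hloop : ∀ i, w i i = 0)
    {ι : Type*} [Fintype ι] [DecidableEq ι] {C : Matrix (Fin (n + 1)) ι ℂ} (hC : C * Cᴴ = 1)
    {Ω : ι → EuclideanSpace ℝ (Fin 3)}
    (hΩ : ∀ α, symbolOp C (fun t ↦ (s * Ω t α : ℝ)) = spinMat n α) :
    symbolOp (tensorMat fun _ : V ↦ C)
        (fun κ ↦ ((s / spinVal n) ^ 2 * chaEnergy w (Ω ∘ κ) : ℝ)) = hQHA n w := by
  have hsymbol : (fun κ : V → ι ↦ (((s / spinVal n) ^ 2 * chaEnergy w (Ω ∘ κ) : ℝ) : ℂ))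
      = ((1 / (4 * spinVal n ^ 2) : ℝ) : ℂ) • ∑ i, ∑ j, (w i j : ℂ) •
        fun κ : V → ι ↦ ((s ^ 2 * ⟪Ω (κ i), Ω (κ j)⟫ : ℝ) : ℂ) := by
    ext κ
    simp only [ofReal_mul_chaEnergy, Pi.smul_apply, Finset.sum_apply, smul_eq_mul,
      Function.comp_apply]
  simp only [hsymbol, hQHA, map_smul, map_sum]
  refine congrArg _ (Finset.sum_congr rfl fun i _ ↦ Finset.sum_congr rfl fun j _ ↦ ?_)
  obtain rfl | hij := eq_or_ne i j
  · rw [hloop, Complex.ofReal_zero, zero_smul, zero_smul]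
  · rw [symbolOp_tensorMat_inner hC hΩ hij]

end Heisenberg

section Variational

variable {m : Type*} [Fintype m] [DecidableEq m] {A : Matrix m m ℂ}

theorem minEig_eq_sInf_spectrum (A : Matrix m m ℂ) : minEig A = sInf (spectrum ℝ A) := by
  rw [minEig]
  congr 1 with r
  rw [spectrum.mem_iff, isUnit_iff_isUnit_det, isUnit_iff_ne_zero, not_not,
    ← exists_mulVec_eq_zero_iff]
  refine exists_congr fun v ↦ and_congr_right fun _ ↦ ?_
  rw [Algebra.algebraMap_eq_smul_one, sub_mulVec, smul_mulVec, one_mulVec, sub_eq_zero, eq_comm,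
    Complex.coe_smul]

theorem le_minEig_iff [Nonempty m] (hA : A.IsHermitian) {r : ℝ} :
    r ≤ minEig A ↔ (A - (r : ℂ) • 1).PosSemidef := by
  have hne : (spectrum ℝ A).Nonempty := by
    rw [hA.spectrum_real_eq_range_eigenvalues]
    exact Set.range_nonempty _
  rw [minEig_eq_sInf_spectrum, le_csInf_iff A.finite_real_spectrum.bddBelow hne, ← Matrix.le_iff,
    Complex.coe_smul, ← Algebra.algebraMap_eq_smul_one, algebraMap_le_iff_le_spectrum (ha := hA)]

theorem le_minEig_symbolOp [Nonempty m] {ι : Type*} [Fintype ι] [DecidableEq ι]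
    {C : Matrix m ι ℂ} (hC : C * Cᴴ = 1) {f : ι → ℝ} {r : ℝ} (hr : ∀ t, r ≤ f t) :
    r ≤ minEig (symbolOp C fun t ↦ (f t : ℂ)) := by
  rw [le_minEig_iff (isHermitian_symbolOp_ofReal C f), ← hC, ← symbolOp_one, ← map_smul, ← map_sub]
  convert posSemidef_symbolOp_ofReal C fun t ↦ sub_nonneg.2 (hr t) using 2
  ext t
  rw [Pi.sub_apply, Pi.smul_apply, Pi.one_apply, smul_eq_mul, mul_one, Complex.ofReal_sub]

end Variational

theorem minEig_le_re_expectation {m : Type*} [Fintype m] {A : Matrix m m ℂ} (hA : A.IsHermitian)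
    {ψ : m → ℂ} (hψ : star ψ ⬝ᵥ ψ = 1) :
    minEig A ≤ (expectation ψ A).re := by
  classical
  have : Nonempty m := by
    by_contra! h
    simp at hψ
  have hnonneg : 0 ≤ expectation ψ (A - (minEig A : ℂ) • 1) :=
    ((le_minEig_iff hA).1 le_rfl).dotProduct_mulVec_nonneg ψ
  rw [map_sub, map_smul, expectation_apply ψ 1, one_mulVec, hψ, smul_eq_mul, mul_one] at hnonneg
  exact sub_nonneg.1 (Complex.le_def.1 hnonneg).1

section LiebInequalities

variable {V : Type*} [Fintype V]

theorem chaVal_le_chaEnergy (w : V → V → ℝ) {Ω : V → EuclideanSpace ℝ (Fin 3)}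
    (hΩ : ∀ i, ‖Ω i‖ = 1) : chaVal w ≤ chaEnergy w Ω := by
  refine csInf_le ⟨1 / 4 * ∑ i, ∑ j, -|w i j|, ?_⟩ ⟨Ω, hΩ, rfl⟩
  rintro _ ⟨u, hu, rfl⟩
  have hinner (i j : V) : |⟪u i, u j⟫| ≤ 1 := by
    simpa only [hu, mul_one] using abs_real_inner_le_norm (u i) (u j)
  rw [chaEnergy]
  gcongr with i _ j
  exact neg_le_of_abs_le (by
    simpa only [abs_mul] using mul_le_of_le_one_right (abs_nonneg (w i j)) (hinner i j))

theorem le_chaVal {w : V → V → ℝ} {r : ℝ}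
    (hr : ∀ Ω : V → EuclideanSpace ℝ (Fin 3), (∀ i, ‖Ω i‖ = 1) → r ≤ chaEnergy w Ω) :
    r ≤ chaVal w := by
  obtain ⟨u, hu⟩ := exists_norm_eq (EuclideanSpace ℝ (Fin 3)) zero_le_one
  refine le_csInf ⟨_, fun _ ↦ u, fun _ ↦ hu, rfl⟩ ?_
  rintro _ ⟨Ω, hΩ, rfl⟩
  exact hr Ω hΩ

variable [DecidableEq V] {n : ℕ} {w : V → V → ℝ}

theorem isHermitian_hQHA (hloop : ∀ i, w i i = 0) : (hQHA n w).IsHermitian := by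
  obtain ⟨ι, _, _, C, Ω, -, hC, hspin⟩ := exists_spin_frame n
  rw [← symbolOp_tensorMat_chaEnergy hloop hC hspin]
  exact isHermitian_symbolOp_ofReal _ _

theorem minEig_hQHA_le_chaEnergy (hn : 1 ≤ n) (hloop : ∀ i, w i i = 0)
    {Ω : V → EuclideanSpace ℝ (Fin 3)} (hΩ : ∀ i, ‖Ω i‖ = 1) :
    minEig (hQHA n w) ≤ chaEnergy w Ω := by
  obtain ⟨n, rfl⟩ := Nat.exists_eq_add_of_le' hn
  have hspin : spinVal (n + 1) ≠ 0 := by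
    rw [spinVal]
    positivity
  choose c hc hcΩ using fun i ↦ exists_expectation_spinMat_eq n (hΩ i)
  have hunit : star (tensorVec c) ⬝ᵥ tensorVec c = 1 := by
    rw [star_tensorVec, tensorVec_dotProduct_tensorVec, Finset.prod_eq_one fun i _ ↦ hc i]
  have hle := minEig_le_re_expectation (isHermitian_hQHA hloop) hunit
  rwa [expectation_tensorVec_hQHA hloop hc hcΩ, Complex.ofReal_re, div_self hspin, one_pow,
    one_mul] at hle

theorem sq_mul_chaVal_le_minEig_hQHA (n : ℕ) (hloop : ∀ i, w i i = 0) :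
    ((spinVal n + 1) / spinVal n) ^ 2 * chaVal w ≤ minEig (hQHA n w) := by
  obtain ⟨ι, _, _, C, Ω, hΩ, hC, hspin⟩ := exists_spin_frame n
  have hCV : tensorMat (fun _ : V ↦ C) * (tensorMat fun _ : V ↦ C)ᴴ = 1 := by
    rw [tensorMat_conjTranspose, tensorMat_mul_tensorMat, hC, tensorMat_one]
  rw [← symbolOp_tensorMat_chaEnergy hloop hC hspin]
  refine le_minEig_symbolOp hCV fun κ ↦ ?_
  gcongr
  exact chaVal_le_chaEnergy w fun i ↦ hΩ (κ i)

theorem lieb_inequalities_general (n : ℕ) (hn : 1 ≤ n) {V : Type*} [Fintype V] [DecidableEq V]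
    (w : V → V → ℝ) (hloop : ∀ i, w i i = 0) :
    ((spinVal n + 1) / spinVal n) ^ 2 * chaVal w ≤ minEig (hQHA n w)
      ∧ minEig (hQHA n w) ≤ chaVal w :=
  ⟨sq_mul_chaVal_le_minEig_hQHA n hloop,
    le_chaVal fun _ hΩ ↦ minEig_hQHA_le_chaEnergy hn hloop hΩ⟩

end LiebInequalities

/-- **Lieb's inequalities.** For every half-integer `S ≥ 1/2` and every finite
undirected graph `G` with nonnegative edge weights,
`((S+1)/S)² · CHA(G) ≤ QHA_S(G) ≤ CHA(G)`, where `QHA_S(G)` is the smallest eigenvalue of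
the spin-`S` Heisenberg antiferromagnet and `CHA(G)` is the classical Heisenberg value. -/
theorem lieb_inequalities (n : ℕ) (hn : 1 ≤ n) {V : Type*} [Fintype V] [DecidableEq V]
    (w : V → V → ℝ) (hsymm : ∀ i j, w i j = w j i) (hnn : ∀ i j, 0 ≤ w i j)
    (hloop : ∀ i, w i i = 0) :
    ((spinVal n + 1) / spinVal n) ^ 2 * chaVal w ≤ minEig (hQHA n w)
      ∧ minEig (hQHA n w) ≤ chaVal w :=
  lieb_inequalities_general n hn w hloop

end
end

section
/- Let S ≥ 1/2 be a half-integer, G = (V,E,w) a finite undirected graph with nonnegative edge weights, and suppose unit vectors Ω_i ∈ S² ⊂ ℝ³ assigned to the vertices satisfy (1/2) Σ_{{i,j}∈E} w_ij (1 − Ω_i·Ω_j) ≥ α_BOV · Prod(G), where Prod(G) = max over assignments of unit vectors to vertices of (1/2) Σ_{{i,j}∈E} w_ij (1 − Ω_i·Ω_j). Then (1/2) Σ_{{i,j}∈E} w_ij (1 − Ω_i·Ω_j) ≥ (S/(S+1))² α_BOV · QMaxCut_S(G). -/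
open Matrix MeasureTheory Filter
open scoped BigOperators RealInnerProductSpace Kronecker

noncomputable section

/-- The Gauss hypergeometric function `₂F₁(1/2, 1/2; 5/2; x)`, defined by its power series
`Σ_{k≥0} ((1/2)_k (1/2)_k)/((5/2)_k k!) x^k`, where `(a)_k` is the rising factorial. -/
def hypF (x : ℝ) : ℝ :=
  ∑' k : ℕ,
    ((∏ m ∈ Finset.range k, ((1:ℝ)/2 + m)) * (∏ m ∈ Finset.range k, ((1:ℝ)/2 + m))
      / ((∏ m ∈ Finset.range k, ((5:ℝ)/2 + m)) * (Nat.factorial k))) * x ^ k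

/-- `F*(3, ρ) = (8/(3π)) ρ ₂F₁(1/2,1/2;5/2;ρ²)`. -/
def Fstar (ρ : ℝ) : ℝ := (8 / (3 * Real.pi)) * ρ * hypF (ρ ^ 2)

/-- `f_S(ρ) = (1 − F*(3,ρ)) / (1 − ((S+1)/S) ρ)`. -/
def fS (S ρ : ℝ) : ℝ := (1 - Fstar ρ) / (1 - ((S + 1) / S) * ρ)

/-- `g(ρ) = (1 − F*(3,ρ)) / (1 − ρ)`. -/
def gBOV (ρ : ℝ) : ℝ := (1 - Fstar ρ) / (1 - ρ)

/-- `α_GP(S) = inf_{ρ ∈ [−1, 0)} f_S(ρ)`. -/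
def alphaGP (S : ℝ) : ℝ := sInf (fS S '' Set.Ico (-1 : ℝ) 0)

/-- `α_BOV = inf_{ρ ∈ [−1, 0)} g(ρ)`. -/
def alphaBOV : ℝ := sInf (gBOV '' Set.Ico (-1 : ℝ) 0)

/-!
If a family of vectors resolves the identity, `∫ |v(x)⟩⟨v(x)| dμ(x) = 1`, then an operator of the
form `A = ∫ f(x) |v(x)⟩⟨v(x)| dμ(x)` has largest eigenvalue at most `sup f`: this is the easy half
of the Berezin–Lieb inequalities, and `f` is called an upper symbol of `A`.

For spin coherent states, the spin vector `(Ŝ¹, Ŝ², Ŝ³)` has the upper symbol `(S + 1) Ω` with `Ω`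
on the unit sphere. To avoid integration over `S²`, the coherent states are realized by Schwinger
bosons: the Gaussian moments of `ℂ` provide upper symbols for one oscillator, products provide them
for two, and restriction to `n = 2S` excitations gives the spin operators as integrals over `ℂ²`,
where `Ω` is the direction of the Hopf map. Since distinct sites have independent variables, the
Hamiltonian has the upper symbol obtained from the cut energy by replacing `Ω_i · Ω_j` with
`((S + 1) / S)² Ω_i · Ω_j`. This is at most `((S + 1) / S)²` times the cut energy, so
`QMaxCut_S(G) ≤ ((S + 1) / S)² Prod(G)`.
-/

/-! ### Gaussian moments on the complex plane -/

lemma integral_norm_pow_mul_exp_neg_norm_sq (k : ℕ) :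
    ∫ z : ℂ, ‖z‖ ^ k * Real.exp (-‖z‖ ^ 2) = Real.pi * Real.Gamma (k / 2 + 1) := by
  have h := Complex.integral_rpow_mul_exp_neg_rpow (p := 2) (q := k) one_le_two
    (by linarith [k.cast_nonneg (α := ℝ)])
  simp only [Real.rpow_natCast, Real.rpow_two] at h
  rw [h, mul_div_cancel_left₀ _ two_ne_zero, add_div, div_self two_ne_zero]

lemma integrable_pow_mul_star_pow_mul_exp_neg_norm_sq (a b : ℕ) :
    Integrable fun z : ℂ ↦ z ^ a * star z ^ b * (Real.exp (-‖z‖ ^ 2) : ℂ) := by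
  have hnorm : Integrable fun z : ℂ ↦ ‖z‖ ^ (a + b) * Real.exp (-‖z‖ ^ 2) := by
    apply Integrable.of_integral_ne_zero
    rw [integral_norm_pow_mul_exp_neg_norm_sq]
    exact (mul_pos Real.pi_pos (Real.Gamma_pos_of_pos (by positivity))).ne'
  refine hnorm.mono' (by fun_prop) (.of_forall fun z ↦ le_of_eq ?_)
  rw [norm_mul, norm_mul, norm_pow, norm_pow, norm_star, pow_add,
    Complex.norm_of_nonneg (Real.exp_nonneg _)]

lemma exists_circle_pow_mul_star_pow_eq_neg_one {a b : ℕ} (hab : a ≠ b) :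
    ∃ c : Circle, (c : ℂ) ^ a * star (c : ℂ) ^ b = -1 := by
  have hsub : (a - b : ℂ) ≠ 0 := sub_ne_zero.2 (by exact_mod_cast hab)
  refine ⟨Circle.exp (Real.pi / (a - b)), ?_⟩
  rw [Complex.star_def, ← Circle.coe_inv_eq_conj, ← Circle.exp_neg, Circle.coe_exp, Circle.coe_exp,
    ← Complex.exp_nat_mul, ← Complex.exp_nat_mul, ← Complex.exp_add, ← Complex.exp_pi_mul_I]
  congr 1
  push_cast
  field_simp
  ring

lemma integral_pow_mul_star_pow_mul_exp_neg_norm_sq (a b : ℕ) :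
    ∫ z : ℂ, z ^ a * star z ^ b * (Real.exp (-‖z‖ ^ 2) : ℂ) =
      if a = b then (Real.pi * a.factorial : ℂ) else 0 := by
  split_ifs with hab
  · subst hab
    have hreal (z : ℂ) : z ^ a * star z ^ a * (Real.exp (-‖z‖ ^ 2) : ℂ) =
        ((‖z‖ ^ (2 * a) * Real.exp (-‖z‖ ^ 2) : ℝ) : ℂ) := by
      rw [← mul_pow, Complex.star_def, Complex.mul_conj']
      push_cast
      ring
    simp_rw [hreal]
    rw [integral_complex_ofReal, integral_norm_pow_mul_exp_neg_norm_sq, Nat.cast_mul, Nat.cast_two,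
      mul_div_cancel_left₀ _ two_ne_zero, Real.Gamma_nat_eq_factorial]
    push_cast
    rfl
  · obtain ⟨c, hc⟩ := exists_circle_pow_mul_star_pow_eq_neg_one hab
    have hrot := (rotation c).measurePreserving.integral_comp
      (rotation c).toHomeomorph.measurableEmbedding
      fun z : ℂ ↦ z ^ a * star z ^ b * (Real.exp (-‖z‖ ^ 2) : ℂ)
    have hneg (z : ℂ) : rotation c z ^ a * star (rotation c z) ^ b *
        (Real.exp (-‖rotation c z‖ ^ 2) : ℂ) =
        -(z ^ a * star z ^ b * (Real.exp (-‖z‖ ^ 2) : ℂ)) := by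
      rw [LinearIsometryEquiv.norm_map, rotation_apply, star_mul', mul_pow, mul_pow]
      linear_combination z ^ a * star z ^ b * (Real.exp (-‖z‖ ^ 2) : ℂ) * hc
    simp_rw [hneg] at hrot
    rw [integral_neg] at hrot
    exact self_eq_neg.1 hrot.symm

/-! ### Upper symbols -/

/-- The tensor product `⨂ m, A m` of a family of operators on `I → ℂ`, as a matrix indexed by the
configurations `V → I`. -/
def piKronecker {V I : Type*} [Fintype V] (A : V → Matrix I I ℂ) : Matrix (V → I) (V → I) ℂ :=
  Matrix.of fun x y ↦ ∏ m, A m (x m) (y m)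

/-- The tensor product `⨂ m, v (x m)` of vectors taken from a family `v`, in the product basis
indexed by the configurations `V → I`. -/
def productState {V X I : Type*} [Fintype V] (v : X → I → ℂ) (x : V → X) (k : V → I) : ℂ :=
  ∏ m, v (x m) (k m)

/-- `f` is an upper symbol of the operator `A` with respect to the family of vectors
`v : X → (I → ℂ)` when `A = ∫ f(x) |v(x)⟩⟨v(x)| dμ(x)`, understood entrywise; in particular the
family resolves the identity when `1` is an upper symbol of `1`. -/
def IsUpperSymbol {X I : Type*} [MeasurableSpace X] (μ : Measure X) (v : X → I → ℂ) (f : X → ℂ)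
    (A : Matrix I I ℂ) : Prop :=
  ∀ a b, Integrable (fun x ↦ f x * (v x a * star (v x b))) μ ∧
    ∫ x, f x * (v x a * star (v x b)) ∂μ = A a b

namespace IsUpperSymbol

variable {X Y I J : Type*} [MeasurableSpace X] [MeasurableSpace Y] {μ : Measure X} {ν : Measure Y}
  {v : X → I → ℂ} {u : Y → J → ℂ} {f g : X → ℂ} {h : Y → ℂ} {A B : Matrix I I ℂ}
  {C : Matrix J J ℂ}

lemma add (hf : IsUpperSymbol μ v f A) (hg : IsUpperSymbol μ v g B) :
    IsUpperSymbol μ v (fun x ↦ f x + g x) (A + B) := fun a b ↦ by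
  simp_rw [add_mul]
  exact ⟨(hf a b).1.add (hg a b).1, by
    rw [integral_add (hf a b).1 (hg a b).1, (hf a b).2, (hg a b).2, Matrix.add_apply]⟩

lemma const_mul (c : ℂ) (hf : IsUpperSymbol μ v f A) :
    IsUpperSymbol μ v (fun x ↦ c * f x) (c • A) := fun a b ↦ by
  simp_rw [mul_assoc]
  exact ⟨(hf a b).1.const_mul c, by
    rw [integral_const_mul, (hf a b).2, Matrix.smul_apply, smul_eq_mul]⟩

lemma sub (hf : IsUpperSymbol μ v f A) (hg : IsUpperSymbol μ v g B) :
    IsUpperSymbol μ v (fun x ↦ f x - g x) (A - B) := by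
  simpa only [neg_one_mul, neg_one_smul, ← sub_eq_add_neg] using hf.add (hg.const_mul (-1))

lemma sum {ι : Type*} {s : Finset ι} {f : ι → X → ℂ} {A : ι → Matrix I I ℂ}
    (hf : ∀ i ∈ s, IsUpperSymbol μ v (f i) (A i)) :
    IsUpperSymbol μ v (fun x ↦ ∑ i ∈ s, f i x) (∑ i ∈ s, A i) := fun a b ↦ by
  simp_rw [Finset.sum_mul]
  exact ⟨integrable_finsetSum s fun i hi ↦ (hf i hi a b).1, by
    rw [integral_finsetSum s fun i hi ↦ (hf i hi a b).1, Matrix.sum_apply]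
    exact Finset.sum_congr rfl fun i hi ↦ (hf i hi a b).2⟩

lemma conjTranspose (hf : IsUpperSymbol μ v f A) :
    IsUpperSymbol μ v (fun x ↦ star (f x)) Aᴴ := fun a b ↦ by
  have hstar (x : X) : star (f x) * (v x a * star (v x b)) =
      star (f x * (v x b * star (v x a))) := by
    simp only [star_mul', star_star]
    ring
  simp_rw [hstar]
  exact ⟨(RCLike.conjLIE (K := ℂ)).integrable_comp_iff.2 (hf b a).1, by
    rw [Matrix.conjTranspose_apply, ← (hf b a).2]
    exact integral_conj⟩

lemma submatrix (hf : IsUpperSymbol μ v f A) (e : J → I) :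
    IsUpperSymbol μ (fun x j ↦ v x (e j)) f (A.submatrix e e) :=
  fun a b ↦ hf (e a) (e b)

lemma smul_vec {c : X → ℂ} (hf : IsUpperSymbol μ v (fun x ↦ (‖c x‖ ^ 2 : ℂ) * f x) A) :
    IsUpperSymbol μ (fun x ↦ c x • v x) f A := fun a b ↦ by
  have hweight (x : X) : f x * ((c x • v x) a * star ((c x • v x) b)) =
      (‖c x‖ ^ 2 : ℂ) * f x * (v x a * star (v x b)) := by
    simp only [Pi.smul_apply, smul_eq_mul, star_mul', Complex.star_def, ← Complex.mul_conj']
    ring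
  simp_rw [hweight]
  exact hf a b

lemma kronecker [SFinite μ] [SFinite ν] (hf : IsUpperSymbol μ v f A) (hh : IsUpperSymbol ν u h C) :
    IsUpperSymbol (μ.prod ν) (fun z (k : I × J) ↦ v z.1 k.1 * u z.2 k.2)
      (fun z ↦ f z.1 * h z.2) (A ⊗ₖ C) := fun a b ↦ by
  have hfactor (z : X × Y) : f z.1 * h z.2 *
      (v z.1 a.1 * u z.2 a.2 * star (v z.1 b.1 * u z.2 b.2)) =
      f z.1 * (v z.1 a.1 * star (v z.1 b.1)) * (h z.2 * (u z.2 a.2 * star (u z.2 b.2))) := by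
    rw [star_mul']
    ring
  simp_rw [hfactor]
  exact ⟨(hf _ _).1.mul_prod (hh _ _).1, by
    rw [integral_prod_mul (fun x ↦ f x * (v x a.1 * star (v x b.1)))
      (fun y ↦ h y * (u y a.2 * star (u y b.2))), (hf _ _).2, (hh _ _).2,
      Matrix.kroneckerMap_apply]⟩

lemma piKronecker {V : Type*} [Fintype V] [SigmaFinite μ] {f : V → X → ℂ}
    {A : V → Matrix I I ℂ} (hf : ∀ m, IsUpperSymbol μ v (f m) (A m)) :
    IsUpperSymbol (Measure.pi fun _ : V ↦ μ) (productState v) (fun x ↦ ∏ m, f m (x m))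
      (piKronecker A) := fun a b ↦ by
  simp_rw [productState, star_prod, ← Finset.prod_mul_distrib]
  exact ⟨Integrable.fintype_prod fun m ↦ (hf m (a m) (b m)).1, by
    rw [integral_fintype_prod_eq_prod
      fun m x ↦ f m x * (v x (a m) * star (v x (b m))), _root_.piKronecker, Matrix.of_apply]
    exact Finset.prod_congr rfl fun m _ ↦ (hf m (a m) (b m)).2⟩

lemma star_dotProduct_mulVec [Fintype I] (hf : IsUpperSymbol μ v f A) (ψ : I → ℂ) :
    star ψ ⬝ᵥ (A *ᵥ ψ) = ∫ x, f x * (‖star ψ ⬝ᵥ v x‖ ^ 2 : ℂ) ∂μ := by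
  have hexpand (x : X) : f x * (‖star ψ ⬝ᵥ v x‖ ^ 2 : ℂ) =
      ∑ a, ∑ b, star (ψ a) * ψ b * (f x * (v x a * star (v x b))) := by
    rw [← Complex.mul_conj', ← Complex.star_def, ← star_dotProduct_star, star_star, dotProduct,
      dotProduct, Finset.sum_mul_sum, Finset.mul_sum]
    refine Finset.sum_congr rfl fun a _ ↦ ?_
    rw [Finset.mul_sum]
    refine Finset.sum_congr rfl fun b _ ↦ ?_
    simp only [Pi.star_apply]
    ring
  have hint (a b : I) : Integrable
      (fun x ↦ star (ψ a) * ψ b * (f x * (v x a * star (v x b)))) μ :=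
    (hf a b).1.const_mul _
  simp_rw [hexpand]
  rw [integral_finsetSum _ fun a _ ↦ integrable_finsetSum _ fun b _ ↦ hint a b]
  refine Finset.sum_congr rfl fun a _ ↦ ?_
  rw [integral_finsetSum _ fun b _ ↦ hint a b, Matrix.mulVec, dotProduct, Finset.mul_sum]
  refine Finset.sum_congr rfl fun b _ ↦ ?_
  rw [integral_const_mul, (hf a b).2, Pi.star_apply]
  ring

lemma isHermitian {f : X → ℝ} (hf : IsUpperSymbol μ v (fun x ↦ (f x : ℂ)) A) :
    A.IsHermitian := by
  ext a b
  rw [← (hf a b).2, ← (hf.conjTranspose a b).2]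
  simp only [Complex.star_def, Complex.conj_ofReal]

open scoped ComplexOrder in
lemma posSemidef [Finite I] {f : X → ℝ} (hf : IsUpperSymbol μ v (fun x ↦ (f x : ℂ)) A)
    (hf_nonneg : ∀ x, 0 ≤ f x) : A.PosSemidef := by
  have := Fintype.ofFinite I
  refine .of_dotProduct_mulVec_nonneg hf.isHermitian fun ψ ↦ ?_
  have hreal (x : X) : (f x : ℂ) * (‖star ψ ⬝ᵥ v x‖ ^ 2 : ℂ) =
      ((f x * ‖star ψ ⬝ᵥ v x‖ ^ 2 : ℝ) : ℂ) := by push_cast; rfl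
  simp_rw [hf.star_dotProduct_mulVec, hreal]
  rw [integral_complex_ofReal]
  exact Complex.zero_le_real.2 (integral_nonneg fun x ↦ mul_nonneg (hf_nonneg x) (by positivity))

end IsUpperSymbol

open scoped ComplexOrder in
lemma maxEig_le_of_posSemidef {I : Type*} [Fintype I] [DecidableEq I] {A : Matrix I I ℂ} {c : ℝ}
    (hc : 0 ≤ c) (hA : ((c : ℂ) • 1 - A).PosSemidef) : maxEig A ≤ c := by
  refine Real.sSup_le ?_ hc
  rintro r ⟨ψ, hψ, hr⟩
  have hquad := hA.dotProduct_mulVec_nonneg ψ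
  rw [Matrix.sub_mulVec, Matrix.smul_mulVec, Matrix.one_mulVec, hr, ← sub_smul, dotProduct_smul,
    smul_eq_mul] at hquad
  have hnorm : 0 < star ψ ⬝ᵥ ψ := dotProduct_star_self_pos_iff.2 hψ
  rw [← Complex.ofReal_sub, Complex.eq_re_of_ofReal_le hnorm.le, ← Complex.ofReal_mul,
    Complex.zero_le_real] at hquad
  exact sub_nonneg.1 (nonneg_of_mul_nonneg_left hquad (Complex.pos_iff.1 hnorm).1)

lemma IsUpperSymbol.maxEig_le {X I : Type*} [MeasurableSpace X] {μ : Measure X} [Fintype I]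
    [DecidableEq I] {v : X → I → ℂ} {f : X → ℝ} {A : Matrix I I ℂ} {c : ℝ}
    (hone : IsUpperSymbol μ v (fun _ ↦ 1) 1) (hf : IsUpperSymbol μ v (fun x ↦ (f x : ℂ)) A)
    (hfc : ∀ x, f x ≤ c) (hc : 0 ≤ c) : maxEig A ≤ c := by
  refine maxEig_le_of_posSemidef hc (posSemidef (μ := μ) (v := v) (f := fun x ↦ c - f x) ?_
    fun x ↦ sub_nonneg.2 (hfc x))
  simpa only [mul_one, Complex.ofReal_sub] using (hone.const_mul (c : ℂ)).sub hf

/-! ### Oscillators and spins -/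

/-- The Glauber coherent state `π^(-1/2) |z⟩` of a harmonic oscillator in its number basis; the
factor `π^(-1/2)` makes the family resolve the identity with respect to Lebesgue measure. -/
def glauberState (z : ℂ) (k : ℕ) : ℂ :=
  z ^ k * Real.exp (-‖z‖ ^ 2 / 2) / Real.sqrt (Real.pi * k.factorial)

/-- The creation operator of a harmonic oscillator in its number basis. -/
def creationOp : Matrix ℕ ℕ ℂ :=
  Matrix.of fun a b ↦ if a = b + 1 then (Real.sqrt a : ℂ) else 0

lemma isUpperSymbol_pow_mul_star_pow (p q : ℕ) :
    IsUpperSymbol volume glauberState (fun z ↦ z ^ p * star z ^ q)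
      (Matrix.of fun a b ↦ if a + p = b + q then
        ((a + p).factorial / (Real.sqrt a.factorial * Real.sqrt b.factorial) : ℂ) else 0) := by
  intro a b
  have hmoment (z : ℂ) : z ^ p * star z ^ q * (glauberState z a * star (glauberState z b)) =
      (Real.pi * (Real.sqrt a.factorial * Real.sqrt b.factorial) : ℂ)⁻¹ *
        (z ^ (a + p) * star z ^ (b + q) * (Real.exp (-‖z‖ ^ 2) : ℂ)) := by
    have hexp : Real.exp (-‖z‖ ^ 2 / 2) * Real.exp (-‖z‖ ^ 2 / 2) = Real.exp (-‖z‖ ^ 2) := by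
      rw [← Real.exp_add, add_halves]
    have hsqrt : Real.sqrt Real.pi * Real.sqrt Real.pi = Real.pi :=
      Real.mul_self_sqrt Real.pi_pos.le
    simp only [glauberState, Real.sqrt_mul Real.pi_pos.le, star_div₀, star_mul', star_pow,
      Complex.star_def, Complex.conj_ofReal]
    rw [← hexp]
    nth_rw 3 [← hsqrt]
    push_cast
    ring
  simp_rw [hmoment]
  refine ⟨(integrable_pow_mul_star_pow_mul_exp_neg_norm_sq _ _).const_mul _, ?_⟩
  rw [integral_const_mul, integral_pow_mul_star_pow_mul_exp_neg_norm_sq, Matrix.of_apply, mul_ite,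
    mul_zero]
  have hpi : (Real.pi : ℂ) ≠ 0 := Complex.ofReal_ne_zero.2 Real.pi_ne_zero
  congr 1
  field_simp

lemma isUpperSymbol_glauberState_one : IsUpperSymbol volume glauberState (fun _ ↦ 1) 1 := by
  convert isUpperSymbol_pow_mul_star_pow 0 0 using 1
  · simp only [pow_zero, mul_one]
  ext a b
  simp only [Matrix.one_apply, Matrix.of_apply, add_zero]
  split_ifs with h
  · subst h
    rw [← Complex.ofReal_mul, Real.mul_self_sqrt (by positivity), Complex.ofReal_natCast,
      div_self (by exact_mod_cast a.factorial_ne_zero)]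
  · rfl

lemma isUpperSymbol_norm_sq : IsUpperSymbol volume glauberState (fun z ↦ (‖z‖ ^ 2 : ℂ))
    (Matrix.diagonal fun k ↦ (k + 1 : ℂ)) := by
  convert isUpperSymbol_pow_mul_star_pow 1 1 using 1
  · simp only [pow_one, Complex.star_def, Complex.mul_conj']
  ext a b
  simp only [Matrix.diagonal_apply, Matrix.of_apply, add_left_inj]
  split_ifs with h
  · subst h
    rw [← Complex.ofReal_mul, Real.mul_self_sqrt (by positivity), Complex.ofReal_natCast,
      Nat.factorial_succ, Nat.cast_mul, Nat.cast_succ,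
      mul_div_cancel_right₀ _ (by exact_mod_cast a.factorial_ne_zero)]
  · rfl

lemma isUpperSymbol_star : IsUpperSymbol volume glauberState star creationOp := by
  convert isUpperSymbol_pow_mul_star_pow 0 1 using 1
  · simp only [pow_zero, pow_one, one_mul]
  ext a b
  simp only [creationOp, Matrix.of_apply, add_zero]
  split_ifs with h
  · subst h
    norm_cast
    have hb : Real.sqrt b.factorial * Real.sqrt b.factorial = b.factorial :=
      Real.mul_self_sqrt (by positivity)
    have hb1 : Real.sqrt (b + 1 : ℕ) * Real.sqrt (b + 1 : ℕ) = (b + 1 : ℕ) :=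
      Real.mul_self_sqrt (by positivity)
    rw [Nat.factorial_succ, Nat.cast_mul, Real.sqrt_mul (Nat.cast_nonneg _),
      eq_div_iff (by positivity)]
    linear_combination (Real.sqrt (b + 1 : ℕ) * Real.sqrt (b + 1 : ℕ)) * hb + b.factorial * hb1
  · rfl

/-- The projection of a product of two Glauber states onto the `n`-excitation subspace of two
oscillators, the Jordan–Schwinger model of a spin `n / 2`. -/
def schwingerState (n : ℕ) (z : ℂ × ℂ) (k : Fin (n + 1)) : ℂ :=
  glauberState z.1 k * glauberState z.2 (n - k)

/-- The compression of an operator on two oscillators to the `n`-excitation subspace, in the basis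
`|k⟩ ⊗ |n - k⟩`. -/
def schwingerBlock (n : ℕ) (A : Matrix (ℕ × ℕ) (ℕ × ℕ) ℂ) : Matrix (Fin (n + 1)) (Fin (n + 1)) ℂ :=
  A.submatrix (fun k ↦ ((k : ℕ), n - (k : ℕ))) (fun k ↦ ((k : ℕ), n - (k : ℕ)))

lemma IsUpperSymbol.schwingerBlock {f g : ℂ → ℂ} {A B : Matrix ℕ ℕ ℂ} (n : ℕ)
    (hf : IsUpperSymbol volume glauberState f A) (hg : IsUpperSymbol volume glauberState g B) :
    IsUpperSymbol volume (schwingerState n) (fun z ↦ f z.1 * g z.2)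
      (schwingerBlock n (A ⊗ₖ B)) :=
  (hf.kronecker hg).submatrix fun k : Fin (n + 1) ↦ ((k : ℕ), n - (k : ℕ))

lemma spinP_eq_schwingerBlock (n : ℕ) :
    spinP n = schwingerBlock n (creationOp ⊗ₖ creationOpᴴ) := by
  ext a b
  have ha := a.is_le
  simp only [spinP, schwingerBlock, creationOp, Matrix.submatrix_apply, Matrix.kroneckerMap_apply,
    Matrix.conjTranspose_apply, Matrix.of_apply]
  by_cases h : (a : ℕ) = b + 1
  · rw [if_pos h, if_pos h, if_pos (by omega), Complex.star_def, Complex.conj_ofReal,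
      ← Complex.ofReal_mul, ← Real.sqrt_mul (Nat.cast_nonneg _), h, Nat.cast_sub (by omega)]
    congr 2
    simp only [spinVal]
    push_cast
    ring
  · rw [if_neg h, if_neg h, zero_mul]

lemma schwingerBlock_diagonal_kronecker_one (n : ℕ) (d : ℕ → ℂ) :
    schwingerBlock n (Matrix.diagonal d ⊗ₖ 1) = Matrix.diagonal fun k : Fin (n + 1) ↦ d k := by
  ext a b
  by_cases h : a = b
  · subst h
    simp [schwingerBlock]
  · simp [schwingerBlock, Matrix.diagonal_apply_ne, h, Fin.val_ne_of_ne h]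

lemma schwingerBlock_one_kronecker_diagonal (n : ℕ) (d : ℕ → ℂ) :
    schwingerBlock n (1 ⊗ₖ Matrix.diagonal d) =
      Matrix.diagonal fun k : Fin (n + 1) ↦ d (n - k) := by
  ext a b
  by_cases h : a = b
  · subst h
    simp [schwingerBlock]
  · simp [schwingerBlock, Matrix.diagonal_apply_ne, h, Fin.val_ne_of_ne h]

/-- The Hopf map `ℂ² → ℝ³`, normalized so that `‖hopfMap z‖ = |z₁|² + |z₂|²`. -/
def hopfMap (z : ℂ × ℂ) : EuclideanSpace ℝ (Fin 3) :=
  !₂[2 * (star z.1 * z.2).re, 2 * (star z.1 * z.2).im, ‖z.1‖ ^ 2 - ‖z.2‖ ^ 2]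

lemma norm_hopfMap (z : ℂ × ℂ) : ‖hopfMap z‖ = ‖z.1‖ ^ 2 + ‖z.2‖ ^ 2 := by
  have hcross : (star z.1 * z.2).re ^ 2 + (star z.1 * z.2).im ^ 2 = ‖z.1‖ ^ 2 * ‖z.2‖ ^ 2 := by
    rw [← mul_pow, ← norm_star z.1, ← norm_mul, Complex.sq_norm, Complex.normSq_apply]
    ring
  rw [EuclideanSpace.norm_eq, Real.sqrt_eq_iff_eq_sq (by positivity) (by positivity)]
  simp only [hopfMap, Fin.sum_univ_three, Real.norm_eq_abs, sq_abs, Matrix.cons_val]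
  linear_combination 4 * hcross

lemma isUpperSymbol_norm_hopfMap (n : ℕ) :
    IsUpperSymbol volume (schwingerState n) (fun z ↦ (‖hopfMap z‖ : ℂ)) ((n + 2 : ℂ) • 1) := by
  convert (isUpperSymbol_norm_sq.schwingerBlock n isUpperSymbol_glauberState_one).add
    (isUpperSymbol_glauberState_one.schwingerBlock n isUpperSymbol_norm_sq) using 1
  · ext z
    simp [norm_hopfMap]
  · rw [schwingerBlock_diagonal_kronecker_one, schwingerBlock_one_kronecker_diagonal,
      Matrix.diagonal_add, Matrix.smul_one_eq_diagonal]
    congr 1 with k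
    rw [Nat.cast_sub k.is_le]
    ring

lemma isUpperSymbol_spinMat (n : ℕ) (α : Fin 3) :
    IsUpperSymbol volume (schwingerState n) (fun z ↦ (1 / 2 : ℂ) * hopfMap z α) (spinMat n α) := by
  have hraise : IsUpperSymbol volume (schwingerState n) (fun z ↦ star z.1 * z.2) (spinP n) := by
    simpa only [spinP_eq_schwingerBlock, star_star] using
      isUpperSymbol_star.schwingerBlock n isUpperSymbol_star.conjTranspose
  fin_cases α
  · convert (hraise.add hraise.conjTranspose).const_mul (1 / 2) using 1
    · ext z
      change _ = 1 / 2 * (star z.1 * z.2 + starRingEnd ℂ (star z.1 * z.2))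
      rw [Complex.add_conj]
      simp only [hopfMap, Fin.zero_eta, Matrix.cons_val]
    · rfl
  · convert (hraise.sub hraise.conjTranspose).const_mul (1 / (2 * Complex.I)) using 1
    · ext z
      change _ = 1 / (2 * Complex.I) * (star z.1 * z.2 - starRingEnd ℂ (star z.1 * z.2))
      rw [Complex.sub_conj]
      simp only [hopfMap, Fin.mk_one, Matrix.cons_val]
      field_simp
    · rfl
  · convert ((isUpperSymbol_norm_sq.schwingerBlock n isUpperSymbol_glauberState_one).sub
      (isUpperSymbol_glauberState_one.schwingerBlock n isUpperSymbol_norm_sq)).const_mul (1 / 2)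
      using 1
    · ext z
      simp [hopfMap]
    · rw [schwingerBlock_diagonal_kronecker_one, schwingerBlock_one_kronecker_diagonal,
        Matrix.diagonal_sub, ← Matrix.diagonal_smul]
      refine congr_arg Matrix.diagonal (funext fun k ↦ ?_)
      rw [Pi.smul_apply, Nat.cast_sub k.is_le, spinVal, smul_eq_mul]
      push_cast
      ring

/-- The direction of `hopfMap z` on the unit sphere; where the Hopf map vanishes, an arbitrary
fixed direction is used so that every value is a unit vector. -/
def blochVector (z : ℂ × ℂ) : EuclideanSpace ℝ (Fin 3) :=
  if hopfMap z = 0 then EuclideanSpace.single 0 1 else NormedSpace.normalize (hopfMap z)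

lemma norm_blochVector (z : ℂ × ℂ) : ‖blochVector z‖ = 1 := by
  unfold blochVector
  split_ifs with h
  · simp
  · exact NormedSpace.norm_normalize h

lemma norm_hopfMap_smul_blochVector (z : ℂ × ℂ) : ‖hopfMap z‖ • blochVector z = hopfMap z := by
  unfold blochVector
  split_ifs with h
  · rw [h, norm_zero, zero_smul]
  · exact NormedSpace.norm_smul_normalize _

/-- Spin-`n / 2` coherent states, parametrized by `ℂ²`: the Schwinger state at `z` reweighted so
that the family resolves the identity and `blochVector` becomes proportional to an upper symbol
of the spin vector. -/
def spinCoherentState (n : ℕ) (z : ℂ × ℂ) : Fin (n + 1) → ℂ :=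
  (Real.sqrt (‖hopfMap z‖ / (n + 2)) : ℂ) • schwingerState n z

lemma IsUpperSymbol.spinCoherentState {n : ℕ} {f : ℂ × ℂ → ℂ}
    {A : Matrix (Fin (n + 1)) (Fin (n + 1)) ℂ}
    (hf : IsUpperSymbol volume (schwingerState n) (fun z ↦ ‖hopfMap z‖ / (n + 2) * f z) A) :
    IsUpperSymbol volume (spinCoherentState n) f A := by
  refine smul_vec ?_
  convert hf using 3 with z
  rw [Complex.norm_of_nonneg (Real.sqrt_nonneg _), ← Complex.ofReal_pow,
    Real.sq_sqrt (by positivity)]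
  push_cast
  rfl

lemma isUpperSymbol_spinCoherentState_one (n : ℕ) :
    IsUpperSymbol volume (spinCoherentState n) (fun _ ↦ 1) 1 := by
  have hn : (n + 2 : ℂ) ≠ 0 := by exact_mod_cast (n + 1).succ_ne_zero
  refine IsUpperSymbol.spinCoherentState ?_
  simpa only [mul_one, div_eq_inv_mul, inv_smul_smul₀ hn] using
    (isUpperSymbol_norm_hopfMap n).const_mul (n + 2 : ℂ)⁻¹

lemma isUpperSymbol_blochVector (n : ℕ) (α : Fin 3) :
    IsUpperSymbol volume (spinCoherentState n)
      (fun z ↦ (spinVal n + 1 : ℂ) * blochVector z α) (spinMat n α) := by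
  have hn : (n + 2 : ℂ) ≠ 0 := by exact_mod_cast (n + 1).succ_ne_zero
  refine IsUpperSymbol.spinCoherentState ?_
  convert isUpperSymbol_spinMat n α using 2 with z
  rw [← norm_hopfMap_smul_blochVector z, norm_smul, norm_norm, norm_blochVector, PiLp.smul_apply,
    smul_eq_mul, spinVal]
  push_cast
  field_simp

/-! ### Tensor products over the vertices -/

lemma piKronecker_one {V I : Type*} [Fintype V] [DecidableEq I] :
    piKronecker (1 : V → Matrix I I ℂ) = 1 := by
  ext x y
  simp [piKronecker, Matrix.one_apply, Finset.prod_ite_zero, funext_iff]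

lemma piKronecker_mul {V I : Type*} [Fintype V] [DecidableEq V] [Fintype I]
    (A B : V → Matrix I I ℂ) : piKronecker (A * B) = piKronecker A * piKronecker B := by
  ext x y
  simp only [piKronecker, Matrix.of_apply, Matrix.mul_apply, Pi.mul_apply, Fintype.prod_sum,
    Finset.prod_mul_distrib]

lemma IsUpperSymbol.productState_one {V X I : Type*} [Fintype V] [DecidableEq I]
    [MeasurableSpace X] {μ : Measure X} [SigmaFinite μ] {v : X → I → ℂ}
    (hone : IsUpperSymbol μ v (fun _ ↦ 1) 1) :
    IsUpperSymbol (Measure.pi fun _ : V ↦ μ) (productState v) (fun _ ↦ 1) 1 := by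
  simpa only [Finset.prod_const_one, piKronecker_one] using
    IsUpperSymbol.piKronecker (A := 1) fun _ ↦ hone

lemma prod_mulSingle_apply {V X M : Type*} [Fintype V] [DecidableEq V] [CommMonoid M] (i : V)
    (f : X → M) (x : V → X) : ∏ m, (Pi.mulSingle i f : V → X → M) m (x m) = f (x i) := by
  rw [Fintype.prod_eq_single i fun m hm ↦ by rw [Pi.mulSingle_eq_of_ne hm, Pi.one_apply],
    Pi.mulSingle_eq_same]

section Lattice

variable {V : Type*} [Fintype V] [DecidableEq V] {n : ℕ}

lemma siteOp_eq_piKronecker (i : V) (A : Matrix (Fin (n + 1)) (Fin (n + 1)) ℂ) :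
    siteOp n i A = piKronecker (Pi.mulSingle i A) := by
  ext x y
  have hoff : ∏ m ∈ Finset.univ.erase i, (Pi.mulSingle i A : V → Matrix _ _ ℂ) m (x m) (y m) =
      if ∀ m ≠ i, x m = y m then 1 else 0 := by
    rw [Finset.prod_congr rfl fun m hm ↦ by
      rw [Pi.mulSingle_eq_of_ne (Finset.ne_of_mem_erase hm), Matrix.one_apply],
      Finset.prod_ite_zero]
    simp
  rw [siteOp, piKronecker, Matrix.of_apply, ← Finset.mul_prod_erase _ _ (Finset.mem_univ i), hoff,
    Pi.mulSingle_eq_same, mul_ite, mul_one, mul_zero]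

section ProductState

variable {X : Type*} [MeasurableSpace X] {μ : Measure X} [SigmaFinite μ]
  {v : X → Fin (n + 1) → ℂ} {f g : X → ℂ} {A B : Matrix (Fin (n + 1)) (Fin (n + 1)) ℂ}

lemma isUpperSymbol_siteOp_mul_siteOp (hone : IsUpperSymbol μ v (fun _ ↦ 1) 1)
    (hf : IsUpperSymbol μ v f A) (hg : IsUpperSymbol μ v g B) {i j : V} (hij : i ≠ j) :
    IsUpperSymbol (Measure.pi fun _ : V ↦ μ) (productState v) (fun x ↦ f (x i) * g (x j))
      (siteOp n i A * siteOp n j B) := by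
  rw [siteOp_eq_piKronecker, siteOp_eq_piKronecker, ← piKronecker_mul]
  have hsite (m : V) : IsUpperSymbol μ v
      ((Pi.mulSingle i f * Pi.mulSingle j g : V → X → ℂ) m)
      ((Pi.mulSingle i A * Pi.mulSingle j B : V → Matrix _ _ ℂ) m) := by
    rcases eq_or_ne m i with rfl | hi
    · simpa [hij] using hf
    · rcases eq_or_ne m j with rfl | hj
      · simpa [hi] using hg
      · simpa [hi, hj] using (show IsUpperSymbol μ v 1 1 from hone)
  convert IsUpperSymbol.piKronecker hsite using 2 with x
  simp only [Pi.mul_apply, Finset.prod_mul_distrib, prod_mulSingle_apply]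

end ProductState

lemma isUpperSymbol_heis {i j : V} (hij : i ≠ j) :
    IsUpperSymbol (Measure.pi fun _ : V ↦ volume) (productState (spinCoherentState n))
      (fun z ↦ (((spinVal n + 1) ^ 2 * ⟪blochVector (z i), blochVector (z j)⟫ : ℝ) : ℂ))
      (heis n i j) := by
  convert IsUpperSymbol.sum fun α (_ : α ∈ Finset.univ) ↦ isUpperSymbol_siteOp_mul_siteOp
    (isUpperSymbol_spinCoherentState_one n) (isUpperSymbol_blochVector n α)
    (isUpperSymbol_blochVector n α) hij using 2 with z
  · rw [PiLp.inner_apply, Finset.mul_sum, Complex.ofReal_sum]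
    refine Finset.sum_congr rfl fun α _ ↦ ?_
    rw [RCLike.inner_apply, conj_trivial]
    push_cast
    ring
  · rfl

/-- The cut energy with every inner product `⟪u i, u j⟫` multiplied by `c`; for
`c = ((S + 1) / S) ^ 2` it is an upper symbol of the Quantum Max-Cut Hamiltonian. -/
def scaledCutEnergy {V : Type*} [Fintype V] (c : ℝ) (w : V → V → ℝ)
    (u : V → EuclideanSpace ℝ (Fin 3)) : ℝ :=
  1 / 4 * ∑ i, ∑ j, w i j * (1 - c * ⟪u i, u j⟫)

lemma isUpperSymbol_hQMC {w : V → V → ℝ} (hloop : ∀ i, w i i = 0) :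
    IsUpperSymbol (Measure.pi fun _ : V ↦ volume) (productState (spinCoherentState n))
      (fun z ↦ (scaledCutEnergy (((spinVal n + 1) / spinVal n) ^ 2) w
        fun i ↦ blochVector (z i) : ℂ)) (hQMC n w) := by
  have hedge (i j : V) : IsUpperSymbol (Measure.pi fun _ : V ↦ volume)
      (productState (spinCoherentState n))
      (fun z ↦ ((w i j * (1 - ((spinVal n + 1) / spinVal n) ^ 2 *
        ⟪blochVector (z i), blochVector (z j)⟫) : ℝ) : ℂ))
      ((w i j : ℂ) • (1 - ((1 / spinVal n ^ 2 : ℝ) : ℂ) • heis n i j)) := by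
    rcases eq_or_ne i j with rfl | hij
    · simp only [hloop, zero_mul, Complex.ofReal_zero, zero_smul]
      simpa only [zero_mul, zero_smul] using
        (isUpperSymbol_spinCoherentState_one n).productState_one.const_mul 0
    · convert ((isUpperSymbol_spinCoherentState_one n).productState_one.sub
        ((isUpperSymbol_heis hij).const_mul _)).const_mul _ using 2 with z
      push_cast
      ring
  convert (IsUpperSymbol.sum fun i _ ↦ IsUpperSymbol.sum fun j _ ↦ hedge i j).const_mul (1 / 4)
    using 2 with z
  · rw [scaledCutEnergy]
    push_cast
    rfl
  · rfl

end Lattice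

/-! ### Comparison with product states -/

section CutEnergy

variable {V : Type*} [Fintype V] {w : V → V → ℝ} {u : V → EuclideanSpace ℝ (Fin 3)}

lemma scaledCutEnergy_le {c : ℝ} (hc : 1 ≤ c) (hw : ∀ i j, 0 ≤ w i j) :
    scaledCutEnergy c w u ≤ c * cutEnergy w u := by
  have hmul : c * cutEnergy w u = 1 / 4 * ∑ i, ∑ j, w i j * (c - c * ⟪u i, u j⟫) := by
    rw [cutEnergy, mul_left_comm]
    simp_rw [Finset.mul_sum _ _ c, mul_left_comm c, mul_sub c, mul_one]
  rw [scaledCutEnergy, hmul]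
  gcongr with i _ j _
  exact hw i j

lemma cutEnergy_nonneg (hw : ∀ i j, 0 ≤ w i j) (hu : ∀ i, ‖u i‖ = 1) : 0 ≤ cutEnergy w u := by
  have hterm (i j : V) : 0 ≤ w i j * (1 - ⟪u i, u j⟫) :=
    mul_nonneg (hw i j) (sub_nonneg.2 (real_inner_le_one_of_norm_eq_one (hu i) (hu j)))
  exact mul_nonneg (by norm_num) (Finset.sum_nonneg fun i _ ↦ Finset.sum_nonneg fun j _ ↦ hterm i j)

lemma prodVal_nonneg (hw : ∀ i j, 0 ≤ w i j) : 0 ≤ prodVal w := by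
  refine Real.sSup_nonneg ?_
  rintro _ ⟨u, hu, rfl⟩
  exact cutEnergy_nonneg hw hu

lemma cutEnergy_le_prodVal (hw : ∀ i j, 0 ≤ w i j) (hu : ∀ i, ‖u i‖ = 1) :
    cutEnergy w u ≤ prodVal w := by
  refine le_csSup ⟨1 / 4 * ∑ i, ∑ j, w i j * 2, ?_⟩ ⟨u, hu, rfl⟩
  rintro _ ⟨u, hu, rfl⟩
  unfold cutEnergy
  gcongr with i _ j _
  · exact hw i j
  · linarith [neg_one_le_real_inner_of_norm_eq_one (hu i) (hu j)]

end CutEnergy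

lemma qMaxCut_le_mul_prodVal {n : ℕ} (hn : 1 ≤ n) {V : Type*} [Fintype V] [DecidableEq V]
    {w : V → V → ℝ} (hw : ∀ i j, 0 ≤ w i j) (hloop : ∀ i, w i i = 0) :
    qMaxCut n w ≤ ((spinVal n + 1) / spinVal n) ^ 2 * prodVal w := by
  have hS : 0 < spinVal n := half_pos (Nat.cast_pos.2 hn)
  have hscale : 1 ≤ ((spinVal n + 1) / spinVal n) ^ 2 :=
    one_le_pow₀ ((one_le_div hS).2 (by linarith))
  refine (isUpperSymbol_spinCoherentState_one n).productState_one.maxEig_le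
    (isUpperSymbol_hQMC hloop) (fun z ↦ ?_) (mul_nonneg (sq_nonneg _) (prodVal_nonneg hw))
  refine (scaledCutEnergy_le hscale hw).trans ?_
  gcongr
  exact cutEnergy_le_prodVal hw fun i ↦ norm_blochVector (z i)

lemma hypF_nonneg {x : ℝ} (hx : 0 ≤ x) : 0 ≤ hypF x :=
  tsum_nonneg fun k ↦ by positivity

lemma alphaBOV_nonneg : 0 ≤ alphaBOV := by
  refine Real.sInf_nonneg ?_
  rintro _ ⟨ρ, ⟨-, hρ⟩, rfl⟩
  have hFstar : Fstar ρ ≤ 0 :=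
    mul_nonpos_of_nonpos_of_nonneg (mul_nonpos_of_nonneg_of_nonpos (by positivity) hρ.le)
      (hypF_nonneg (sq_nonneg ρ))
  exact div_nonneg (by linarith) (by linarith)

/-- If unit vectors `Ω_i ∈ S² ⊂ ℝ³` assigned to the vertices achieve an
`α_BOV`-approximation of `Prod(G)`, then their cut energy is at least
`(S/(S+1))² α_BOV · QMaxCut_S(G)`. -/
theorem bov_rounding_approximates_qMaxCut (n : ℕ) (hn : 1 ≤ n)
    {V : Type*} [Fintype V] [DecidableEq V]
    (w : V → V → ℝ) (hsymm : ∀ i j, w i j = w j i) (hnn : ∀ i j, 0 ≤ w i j)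
    (hloop : ∀ i, w i i = 0)
    (Ω : V → EuclideanSpace ℝ (Fin 3)) (hΩ : ∀ i, ‖Ω i‖ = 1)
    (happrox : alphaBOV * prodVal w ≤ cutEnergy w Ω) :
    (spinVal n / (spinVal n + 1)) ^ 2 * alphaBOV * qMaxCut n w ≤ cutEnergy w Ω := by
  have hS : 0 < spinVal n := half_pos (Nat.cast_pos.2 hn)
  have hα := alphaBOV_nonneg
  calc (spinVal n / (spinVal n + 1)) ^ 2 * alphaBOV * qMaxCut n w
      ≤ (spinVal n / (spinVal n + 1)) ^ 2 * alphaBOV *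
          (((spinVal n + 1) / spinVal n) ^ 2 * prodVal w) := by
        gcongr
        exact qMaxCut_le_mul_prodVal hn hnn hloop
    _ = alphaBOV * prodVal w := by field_simp
    _ ≤ cutEnergy w Ω := happrox

end
end
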